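/- Let v* ∈ Δ be a linearly unstable equilibrium of F. Then the probability that the sequence of empirical occupation measures (v_n) converges to v* is equal to 0. -/

import Mathlib

/-!
The proof compares two independent copies of the process that start from a common past, and shows
that they separate too quickly for both to stay near an unstable equilibrium `v*`.

*Survival.* `surv` is the probability that the chain formed by the visit counts and the current
position keeps its empirical measure in a small ball around `v*` during `k` further steps. Two
independent copies survive with the product of the probabilities (`surv_pair`), so a bound `ρ < 1`
for two copies started from the same state gives the bound `√ρ` for a single one. Since this bound
is uniform in the state, it can be iterated (`LocalModel.surv_small`): the ball is left almost surely
(`measure_tendsto_eq_zero`).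

*Separation of two copies.* Correcting the counts by the solution `Q` of the Poisson equation
`Q - P Q = δ - π` turns one step into a drift `π(v)`, a martingale jump and an error `O(1/T)`
(`LocalModel.corr_step`). The difference `y` of two copies therefore follows
`y ↦ y + (y + D y) / T + ζ + ρ`, where `D = DF(v*)`, `ζ` is centred and `ρ` is small
(`LocalModel.pair_step`). For a suitable quadratic form `B`, the function `Φ = B(y, y)` grows in
mean at rate `p / T` with `p > 2`, and the noise adds a positive constant at each step, up to a
bounded corrector `χ` (`LocalModel.isExpanding`). Hence from `y = 0` the function `Φ` exceeds a
large multiple of `T` with probability bounded below (`IsExpanding.surv_diag`). From there `1 / Φ`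
decays in mean at a rate `q / T` with `q > 2`, which is incompatible with the bound `Φ = O(T²)`
valid in the ball (`IsExpanding.surv_far`).

*The quadratic form.* With the weights `v_i⁻¹` the Jacobian is self-adjoint
(`EqPoint.wt_DFmat_symm`), so instability provides a real eigenvector `w` with eigenvalue `p > 0`.
For `0 < s < p` outside the spectrum of `D`, the form `⟨x, (D - s) y⟩ + L ⟨w, x⟩ ⟨w, y⟩` grows along
`D` at rate more than `2 s` (`lyapForm_coer`). The martingale jumps fluctuate in the direction `w`:
otherwise `D w = -w` (`EqPoint.exists_dirVar_pos`). Taking `L` large then makes the noise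
contribution positive (`EqPoint.exists_localModel`).
-/

open MeasureTheory Filter Set Matrix

noncomputable def Hfun {N : ℕ} (A : Matrix (Fin N) (Fin N) ℝ) (α : ℝ)
    (v : Fin N → ℝ) : ℝ :=
  ∑ i, ∑ j, A i j * v i ^ α * v j ^ α

noncomputable def piFun {N : ℕ} (A : Matrix (Fin N) (Fin N) ℝ) (α : ℝ)
    (v : Fin N → ℝ) : Fin N → ℝ :=
  fun i => v i ^ α * (∑ j, A i j * v j ^ α) / Hfun A α v

noncomputable def Ffield {N : ℕ} (A : Matrix (Fin N) (Fin N) ℝ) (α : ℝ)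
    (v : Fin N → ℝ) : Fin N → ℝ :=
  fun i => piFun A α v i - v i

def simplexD {N : ℕ} (A : Matrix (Fin N) (Fin N) ℝ) : Set (Fin N → ℝ) :=
  {v | (∀ i, 0 ≤ v i) ∧ (∑ i, v i = 1) ∧ ∀ i, A i i = 0 → v i ≤ 3 / 4}

/-- The Jacobian matrix of `F` at `v` (matrix of partial derivatives `∂_j F_i (v)`). -/
noncomputable def DFmat {N : ℕ} (A : Matrix (Fin N) (Fin N) ℝ) (α : ℝ)
    (v : Fin N → ℝ) : Matrix (Fin N) (Fin N) ℝ :=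
  fun i j => lineDeriv ℝ (fun u => Ffield A α u i) v (Pi.single j 1)

/-- `v` is linearly stable: every eigenvalue of `DF(v)`, viewed (after complexification)
as a linear map of `T_0Δ = {x : ∑ x_i = 0}`, has negative real part. -/
def IsLinStable {N : ℕ} (A : Matrix (Fin N) (Fin N) ℝ) (α : ℝ)
    (v : Fin N → ℝ) : Prop :=
  ∀ (lam : ℂ) (x : Fin N → ℂ), x ≠ 0 → (∑ i, x i) = 0 →
    ((DFmat A α v).map (fun r => (r : ℂ))) *ᵥ x = lam • x → lam.re < 0

/-- `v` is linearly unstable: some eigenvalue of `DF(v)`, viewed (after complexification)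
as a linear map of `T_0Δ = {x : ∑ x_i = 0}`, has positive real part. -/
def IsLinUnstable {N : ℕ} (A : Matrix (Fin N) (Fin N) ℝ) (α : ℝ)
    (v : Fin N → ℝ) : Prop :=
  ∃ (lam : ℂ) (x : Fin N → ℂ), x ≠ 0 ∧ (∑ i, x i) = 0 ∧
    ((DFmat A α v).map (fun r => (r : ℂ))) *ᵥ x = lam • x ∧ 0 < lam.re

/-! ### Survival probabilities and expanding functions -/

section Chain

variable {S J : Type*} [Fintype J]

open Classical in
/-- `surv w step ball k T s` is the probability that a chain in state `s` at time `T`, which moves to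
`step s j` with probability `w T s j`, satisfies `ball` at all the times `T, …, T + k`. -/
noncomputable def surv (w : ℕ → S → J → ℝ) (step : S → J → S) (ball : ℕ → S → Prop) :
    ℕ → ℕ → S → ℝ
  | 0, T, s => if ball T s then 1 else 0
  | k + 1, T, s => if ball T s then ∑ j, w T s j * surv w step ball k (T + 1) (step s j) else 0

variable {w : ℕ → S → J → ℝ} {step : S → J → S} {ball : ℕ → S → Prop}

theorem surv_of_not_ball {T : ℕ} {s : S} (h : ¬ ball T s) (k : ℕ) :
    surv w step ball k T s = 0 := by
  cases k <;> simp [surv, h]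

theorem surv_zero_of_ball {T : ℕ} {s : S} (h : ball T s) :
    surv w step ball 0 T s = 1 := by
  simp [surv, h]

theorem surv_succ_of_ball {T : ℕ} {s : S} (h : ball T s) (k : ℕ) :
    surv w step ball (k + 1) T s =
      ∑ j, w T s j * surv w step ball k (T + 1) (step s j) := by
  simp [surv, h]

theorem surv_mem_Icc_of_le {T0 : ℕ}
    (hw : ∀ T ≥ T0, ∀ s, ball T s → (∀ j, 0 ≤ w T s j) ∧ ∑ j, w T s j ≤ 1)
    (k : ℕ) : ∀ T ≥ T0, ∀ s, 0 ≤ surv w step ball k T s ∧ surv w step ball k T s ≤ 1 := by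
  induction k with
  | zero =>
    intro T _ s
    by_cases h : ball T s
    · simp [surv_zero_of_ball h]
    · simp [surv_of_not_ball h]
  | succ k ih =>
    intro T hT s
    by_cases h : ball T s
    · rw [surv_succ_of_ball h]
      obtain ⟨h0, h1⟩ := hw T hT s h
      refine ⟨Finset.sum_nonneg fun j _ => mul_nonneg (h0 j) (ih _ (by omega) _).1, ?_⟩
      calc _ ≤ ∑ j, w T s j := Finset.sum_le_sum fun j _ =>
            mul_le_of_le_one_right (h0 j) (ih _ (by omega) _).2
        _ ≤ 1 := h1
    · simp [surv_of_not_ball h]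

theorem surv_mem_Icc {T0 : ℕ}
    (hw : ∀ T ≥ T0, ∀ s, ball T s → (∀ j, 0 ≤ w T s j) ∧ ∑ j, w T s j = 1)
    (k : ℕ) : ∀ T ≥ T0, ∀ s, 0 ≤ surv w step ball k T s ∧ surv w step ball k T s ≤ 1 :=
  surv_mem_Icc_of_le (fun T hT s hs => ⟨(hw T hT s hs).1, (hw T hT s hs).2.le⟩) k

/-- Markov property: a uniform bound `r` on the survival of the last steps multiplies the probability
of surviving the first `k` ones. -/
theorem surv_add {T0 : ℕ} (hw : ∀ T ≥ T0, ∀ s, ball T s → (∀ j, 0 ≤ w T s j) ∧ ∑ j, w T s j = 1)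
    {k' : ℕ} {r : ℝ} (k : ℕ) : ∀ T ≥ T0, (∀ s, surv w step ball k' (T + k) s ≤ r) →
      ∀ s, surv w step ball (k + k') T s ≤ r * surv w step ball k T s := by
  induction k with
  | zero =>
    intro T hT hr s
    by_cases h : ball T s
    · simpa [surv_zero_of_ball h] using hr s
    · simp [surv_of_not_ball h]
  | succ k ih =>
    intro T hT hr s
    by_cases h : ball T s
    · rw [show k + 1 + k' = (k + k') + 1 by omega, surv_succ_of_ball h, surv_succ_of_ball h,
        Finset.mul_sum]
      refine Finset.sum_le_sum fun j _ => ?_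
      have := ih (T + 1) (by omega) (by
        rw [show T + 1 + k = T + (k + 1) by omega]; exact hr) (step s j)
      nlinarith [(hw T hT s h).1 j]
    · simp [surv_of_not_ball h]

/-- Transition probabilities of two independent copies of the chain run in parallel. -/
def pairW (w : ℕ → S → J → ℝ) : ℕ → S × S → J × J → ℝ :=
  fun T s j => w T s.1 j.1 * w T s.2 j.2

/-- Moves of two copies of the chain run in parallel. -/
def pairStep (step : S → J → S) : S × S → J × J → S × S :=
  fun s j => (step s.1 j.1, step s.2 j.2)

/-- Both copies satisfy `ball`. -/
def pairBall (ball : ℕ → S → Prop) : ℕ → S × S → Prop :=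
  fun T s => ball T s.1 ∧ ball T s.2

/-- Independence of the two copies: the survival probability factorizes. -/
theorem surv_pair (k : ℕ) : ∀ T (s : S × S),
    surv (pairW w) (pairStep step) (pairBall ball) k T s =
      surv w step ball k T s.1 * surv w step ball k T s.2 := by
  induction k with
  | zero =>
    intro T s
    by_cases h1 : ball T s.1 <;> by_cases h2 : ball T s.2 <;>
      simp [surv, pairBall, h1, h2]
  | succ k ih =>
    intro T s
    by_cases h1 : ball T s.1
    · by_cases h2 : ball T s.2
      · rw [surv_succ_of_ball (show pairBall ball T s from ⟨h1, h2⟩), surv_succ_of_ball h1,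
          surv_succ_of_ball h2, Finset.sum_mul_sum, Fintype.sum_prod_type]
        refine Finset.sum_congr rfl fun i _ => Finset.sum_congr rfl fun j _ => ?_
        rw [ih]
        simp only [pairW, pairStep]
        ring
      · rw [surv_of_not_ball (ball := ball) h2, surv_of_not_ball]
        · simp
        · exact fun h => h2 h.2
    · rw [surv_of_not_ball (ball := ball) h1, surv_of_not_ball]
      · simp
      · exact fun h => h1 h.1

/-- `Φ` is an expanding function for the chain as long as `ball` holds: its mean grows at rate `p / T`
with `p > 2`, up to a constant (`drift`), and strictly by `c0` per step once the bounded corrector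
`χ` is added (`noise`). The nonnegative function `Y` plays the role of the norm of a vector of which
`Φ` is a quadratic form: increments of `Φ` are `O(Y + 1)`, `Φ` is `O(Y²)`, and `Y` is `O(T)`. -/
structure IsExpanding (w : ℕ → S → J → ℝ) (step : S → J → S) (ball : ℕ → S → Prop)
    (Φ Y : ℕ → S → ℝ) (χ : S → ℝ) (p c c0 C : ℝ) (T0 : ℕ) : Prop where
  hp : 2 < p
  hc : 0 < c
  hc0 : 0 < c0
  hC : 1 ≤ C
  hT0 : 1 ≤ T0
  hw : ∀ T ≥ T0, ∀ s, ball T s → (∀ j, 0 ≤ w T s j) ∧ ∑ j, w T s j = 1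
  drift : ∀ T ≥ T0, ∀ s, ball T s →
    (1 + p / T) * Φ T s + c * Y T s ^ 2 / T - C ≤ ∑ j, w T s j * Φ (T + 1) (step s j)
  noise : ∀ T ≥ T0, ∀ s, ball T s →
    (1 + p / T) * Φ T s + χ s + c0 ≤
      ∑ j, w T s j * (Φ (T + 1) (step s j) + χ (step s j))
  jump : ∀ T ≥ T0, ∀ s, ball T s → ∀ j,
    |Φ (T + 1) (step s j) - Φ T s| ≤ C * (Y T s + 1)
  quad : ∀ T ≥ T0, ∀ s, ball T s → |Φ T s| ≤ C * Y T s ^ 2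
  Y_nonneg : ∀ T ≥ T0, ∀ s, ball T s → 0 ≤ Y T s
  Y_le : ∀ T ≥ T0, ∀ s, ball T s → Y T s ≤ C * T
  χ_nonneg : ∀ s, 0 ≤ χ s
  χ_le : ∀ s, χ s ≤ C

variable {Φ Y : ℕ → S → ℝ} {χ : S → ℝ} {p c c0 C : ℝ} {T0 : ℕ}

theorem one_div_one_add_le {z : ℝ} (hz : |z| ≤ 1 / 2) : 1 / (1 + z) ≤ 1 - z + 2 * z ^ 2 := by
  rw [abs_le] at hz
  rw [div_le_iff₀ (by linarith)]
  nlinarith [sq_nonneg z, mul_nonneg (sq_nonneg z) (by linarith : (0:ℝ) ≤ 1 + 2 * z)]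

/-- Where `Φ` is larger than a multiple of `T`, the mean of `1 / Φ` decreases at any rate `q / T` with
`q < p`: the second order term of `1 / (1 + z)` is absorbed by the term `c Y² / T` of the drift. -/
theorem IsExpanding.inv_step (h : IsExpanding w step ball Φ Y χ p c c0 C T0) {p' : ℝ}
    (hp' : p' < p) :
    ∃ K : ℝ, 1 ≤ K ∧ ∀ T ≥ T0, ∀ s, ball T s → K * T < Φ T s →
      (∀ j, 0 < Φ (T + 1) (step s j)) ∧
      ∑ j, w T s j * (1 / Φ (T + 1) (step s j)) ≤ (1 - p' / T) * (1 / Φ T s) := by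
  have hc := h.hc
  have hC := h.hC
  set K : ℝ := 4 * C ^ 2 + 4 * C ^ 2 / c + (C + 4 * C ^ 2) / (p - p') with hK
  have hpp : 0 < p - p' := by linarith
  have hC2 : 1 ≤ C ^ 2 := by nlinarith
  have t1 : 0 ≤ 4 * C ^ 2 / c := by positivity
  have t2 : 0 ≤ (C + 4 * C ^ 2) / (p - p') := by positivity
  have hK1 : 4 * C ^ 2 ≤ K := by linarith
  have hK2 : 4 * C ^ 2 ≤ K * c := by
    have : 4 * C ^ 2 / c ≤ K := by nlinarith
    rwa [div_le_iff₀ hc] at this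
  have hK3 : C + 4 * C ^ 2 ≤ K * (p - p') := by
    have : (C + 4 * C ^ 2) / (p - p') ≤ K := by nlinarith
    rwa [div_le_iff₀ hpp] at this
  have hK0 : 1 ≤ K := by nlinarith
  refine ⟨K, hK0, fun T hT s hs hΦ => ?_⟩
  have hT1 : (1 : ℝ) ≤ T := by exact_mod_cast h.hT0.trans hT
  obtain ⟨w0, w1⟩ := h.hw T hT s hs
  have hY0 := h.Y_nonneg T hT s hs
  have hY1 := h.Y_le T hT s hs
  set F := Φ T s with hF
  set y := Y T s with hy
  have hKT : 0 < K * T := by positivity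
  have hF0 : 0 < F := hKT.trans hΦ
  -- `z j` is the relative increment of `Φ` along the move `j`, at most `1 / 2` in absolute value
  set z : J → ℝ := fun j => (Φ (T + 1) (step s j) - F) / F with hz
  have hzF : ∀ j, Φ (T + 1) (step s j) = F * (1 + z j) := by
    intro j; simp only [hz]; field_simp; ring
  have hzabs : ∀ j, |z j| ≤ C * (y + 1) / F := by
    intro j
    simp only [hz, abs_div, abs_of_pos hF0]
    exact div_le_div_of_nonneg_right (h.jump T hT s hs j) hF0.le
  have hzhalf : ∀ j, |z j| ≤ 1 / 2 := by
    intro j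
    refine (hzabs j).trans ?_
    rw [div_le_iff₀ hF0]
    have : C * (y + 1) ≤ 2 * C ^ 2 * T := by nlinarith
    nlinarith
  have hpos : ∀ j, 0 < 1 + z j := by
    intro j; have := (abs_le.1 (hzhalf j)).1; linarith
  refine ⟨fun j => by rw [hzF]; exact mul_pos hF0 (hpos j), ?_⟩
  have hz2 : ∀ j, z j ^ 2 ≤ 2 * C ^ 2 * (y ^ 2 + 1) / (F * (K * T)) := by
    intro j
    have e1 : z j ^ 2 ≤ (C * (y + 1) / F) ^ 2 := by
      rw [← sq_abs]; exact pow_le_pow_left₀ (abs_nonneg _) (hzabs j) 2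
    refine e1.trans ?_
    rw [div_pow]
    have e2 : (C * (y + 1)) ^ 2 ≤ 2 * C ^ 2 * (y ^ 2 + 1) := by
      nlinarith [mul_nonneg (sq_nonneg C) (sq_nonneg (y - 1))]
    calc _ ≤ 2 * C ^ 2 * (y ^ 2 + 1) / F ^ 2 := by gcongr
      _ ≤ _ := by
        apply div_le_div_of_nonneg_left (by positivity) (by positivity)
        nlinarith
  have hEz : p / T + c * y ^ 2 / (T * F) - C / F ≤ ∑ j, w T s j * z j := by
    have e : ∑ j, w T s j * z j = (∑ j, w T s j * Φ (T + 1) (step s j) - F) / F := by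
      have : ∑ j, w T s j * z j = ∑ j, (w T s j * Φ (T + 1) (step s j) - w T s j * F) / F := by
        refine Finset.sum_congr rfl fun j _ => ?_
        simp only [hz]; ring
      rw [this, ← Finset.sum_div, Finset.sum_sub_distrib, ← Finset.sum_mul, w1, one_mul]
    rw [e, le_div_iff₀ hF0]
    have := h.drift T hT s hs
    have e3 : (p / T + c * y ^ 2 / (T * F) - C / F) * F = p / T * F + c * y ^ 2 / T - C := by
      field_simp
    rw [e3]; simp only [← hF, ← hy] at this; linarith
  have step1 : ∑ j, w T s j * (1 / Φ (T + 1) (step s j)) ≤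
      (1 / F) * ∑ j, w T s j * (1 - z j + 2 * (2 * C ^ 2 * (y ^ 2 + 1) / (F * (K * T)))) := by
    rw [Finset.mul_sum]
    refine Finset.sum_le_sum fun j _ => ?_
    have e1 : 1 / Φ (T + 1) (step s j) = (1 / F) * (1 / (1 + z j)) := by
      rw [hzF]; field_simp
    rw [e1]
    have := one_div_one_add_le (hzhalf j)
    have e2 := hz2 j
    calc w T s j * (1 / F * (1 / (1 + z j))) = (1 / F) * (w T s j * (1 / (1 + z j))) := by ring
      _ ≤ _ := by
        have := w0 j
        gcongr
        linarith
  refine step1.trans ?_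
  rw [mul_comm (1 - p' / T)]
  refine mul_le_mul_of_nonneg_left ?_ (by positivity)
  have e4 : ∑ j, w T s j * (1 - z j + 2 * (2 * C ^ 2 * (y ^ 2 + 1) / (F * (K * T)))) =
      1 - ∑ j, w T s j * z j + 2 * (2 * C ^ 2 * (y ^ 2 + 1) / (F * (K * T))) := by
    simp only [mul_add, mul_sub, Finset.sum_add_distrib, Finset.sum_sub_distrib, mul_one,
      ← Finset.sum_mul, w1, one_mul]
  rw [e4]
  have e5 : 2 * (2 * C ^ 2 * (y ^ 2 + 1) / (F * (K * T))) ≤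
      c * y ^ 2 / (T * F) + 4 * C ^ 2 / K / T := by
    have a1 : 2 * (2 * C ^ 2 * (y ^ 2 + 1) / (F * (K * T))) =
       (4 * C ^ 2 / K) * (y ^ 2 / (T * F)) + 4 * C ^ 2 / K / T / F := by
      field_simp
      ring
    have a2 : 4 * C ^ 2 / K ≤ c := by rw [div_le_iff₀ (by linarith)]; linarith
    have a3 : 4 * C ^ 2 / K / T / F ≤ 4 * C ^ 2 / K / T := by
      apply div_le_self (by positivity)
      nlinarith
    have a4 : (4 * C ^ 2 / K) * (y ^ 2 / (T * F)) ≤ c * (y ^ 2 / (T * F)) := by gcongr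
    rw [a1, mul_div_assoc c]; linarith
  have e6 : C / F ≤ C / K / T := by
    rw [div_div]
    apply div_le_div_of_nonneg_left (by linarith) hKT hΦ.le
  have e7 : (C / K + 4 * C ^ 2 / K) / T ≤ (p - p') / T := by
    gcongr
    rw [← add_div, div_le_iff₀ (by linarith)]; linarith
  rw [add_div, sub_div] at e7
  linarith

/-- Survival is unlikely where `Φ` is large. The factor `K T / Φ` accounts for a return of `Φ` below
`K T`; the other term comes from the decay of `1 / Φ` at rate `q / T` with `q > 2` against the bound
`Φ ≤ C³ T²` at the final time, and vanishes as `k → ∞`. -/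
theorem IsExpanding.surv_far (h : IsExpanding w step ball Φ Y χ p c c0 C T0) :
    ∃ K : ℝ, 1 ≤ K ∧ ∃ q : ℝ, 2 < q ∧ ∀ k : ℕ, ∀ T ≥ T0, ∀ s, 0 < Φ T s →
      surv w step ball k T s ≤
        (K * T + C ^ 3 * ((T + k : ℕ) : ℝ) ^ (2 - q) * (T : ℝ) ^ q) * (1 / Φ T s) := by
  set q := (p + 2) / 2 with hq
  have hp := h.hp
  have hC := h.hC
  obtain ⟨K, hK, hstep⟩ := h.inv_step (p' := q) (by linarith)
  refine ⟨K, hK, q, by linarith, ?_⟩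
  intro k
  induction k with
  | zero =>
    intro T hT s hΦ
    have hT1 : (1 : ℝ) ≤ T := by exact_mod_cast h.hT0.trans hT
    by_cases hs : ball T s
    · rw [surv_zero_of_ball hs, add_zero, mul_assoc (C ^ 3), ← Real.rpow_add (by linarith)]
      rw [show 2 - q + q = (2 : ℝ) by ring, Real.rpow_two, mul_one_div, le_div_iff₀ hΦ, one_mul]
      have a1 := (le_abs_self _).trans (h.quad T hT s hs)
      have a2 := h.Y_le T hT s hs
      have a3 := h.Y_nonneg T hT s hs
      have a4 : Y T s ^ 2 ≤ (C * T) ^ 2 := pow_le_pow_left₀ a3 a2 2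
      have : C * Y T s ^ 2 ≤ C * (C * T) ^ 2 := by gcongr
      nlinarith
    · rw [surv_of_not_ball hs]; positivity
  | succ k ih =>
    intro T hT s hΦ
    have hT1 : (1 : ℝ) ≤ T := by exact_mod_cast h.hT0.trans hT
    have hw := h.hw
    by_cases hs : ball T s
    swap
    · rw [surv_of_not_ball hs]; positivity
    by_cases hbig : K * T < Φ T s
    swap
    · refine ((surv_mem_Icc hw _ T hT s).2).trans ?_
      rw [mul_one_div, le_div_iff₀ hΦ, one_mul]
      have : 0 ≤ C ^ 3 * ((T + (k + 1) : ℕ) : ℝ) ^ (2 - q) * (T : ℝ) ^ q := by positivity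
      linarith [not_lt.1 hbig]
    obtain ⟨hpos, hE⟩ := hstep T hT s hs hbig
    rw [surv_succ_of_ball hs]
    have hcast : T + 1 + k = T + (k + 1) := by omega
    set c1 := C ^ 3 * ((T + (k + 1) : ℕ) : ℝ) ^ (2 - q) with hc1
    have hc1' : 0 ≤ c1 := by positivity
    calc ∑ j, w T s j * surv w step ball k (T + 1) (step s j)
        ≤ ∑ j, w T s j * ((K * (T + 1 : ℕ) + c1 * ((T + 1 : ℕ) : ℝ) ^ q) *
            (1 / Φ (T + 1) (step s j))) := by
          refine Finset.sum_le_sum fun j _ => ?_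
          refine mul_le_mul_of_nonneg_left ?_ ((hw T hT s hs).1 j)
          have := ih (T + 1) (by omega) (step s j) (hpos j)
          rwa [hcast] at this
      _ = (K * (T + 1 : ℕ) + c1 * ((T + 1 : ℕ) : ℝ) ^ q) *
            ∑ j, w T s j * (1 / Φ (T + 1) (step s j)) := by
          rw [Finset.mul_sum]; refine Finset.sum_congr rfl fun j _ => by ring
      _ ≤ (K * (T + 1 : ℕ) + c1 * ((T + 1 : ℕ) : ℝ) ^ q) * ((1 - q / T) * (1 / Φ T s)) := by
          gcongr
      _ ≤ _ := by
          rw [← mul_assoc]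
          refine mul_le_mul_of_nonneg_right ?_ (by positivity)
          rw [add_mul]
          refine add_le_add ?_ ?_
          · push_cast
            rw [mul_assoc]
            refine mul_le_mul_of_nonneg_left ?_ (by linarith)
            have : (T + 1 : ℝ) * (1 - q / T) = T + 1 - q - q / T := by field_simp; ring
            rw [this]
            have : 0 ≤ q / T := by positivity
            linarith
          · rw [mul_assoc]
            refine mul_le_mul_of_nonneg_left ?_ hc1'
            -- `(1 + 1/T)^q (1 - q/T) ≤ exp (q/T) exp (-q/T) = 1`
            have a1 : ((T + 1 : ℕ) : ℝ) = T * (1 + 1 / T) := by push_cast; field_simp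
            rw [a1, Real.mul_rpow (by linarith) (by positivity), mul_assoc]
            refine mul_le_of_le_one_right (by positivity) ?_
            have a2 : (1 + 1 / (T : ℝ)) ^ q ≤ Real.exp (q / T) := by
              have : 1 + 1 / (T : ℝ) ≤ Real.exp (1 / T) := by
                linarith [Real.add_one_le_exp (1 / (T : ℝ))]
              calc _ ≤ (Real.exp (1 / T)) ^ q :=
                    Real.rpow_le_rpow (by positivity) this (by linarith)
                _ = _ := by rw [← Real.exp_mul]; congr 1; ring
            have a3 : 1 - q / T ≤ Real.exp (-(q / T)) := by
              linarith [Real.add_one_le_exp (-(q / (T : ℝ)))]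
            calc _ ≤ (1 + 1 / (T : ℝ)) ^ q * Real.exp (-(q / T)) := by gcongr
              _ ≤ Real.exp (q / T) * Real.exp (-(q / T)) := by gcongr
              _ = 1 := by rw [← Real.exp_add]; simp

/-- The weight `∏_{i < T} (1 + p / i)⁻¹`, of order `T ^ (-p)`, which compensates the growth of `Φ` at
rate `p / T`. The factor of index `i = 0` is `1`, because `p / 0 = 0`. -/
noncomputable def decayWeight (p : ℝ) (T : ℕ) : ℝ := ∏ i ∈ Finset.range T, (1 + p / i)⁻¹

theorem decayWeight_pos (hp : 0 ≤ p) (T : ℕ) : 0 < decayWeight p T :=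
  Finset.prod_pos fun i _ => by positivity

theorem decayWeight_succ (hp : 0 ≤ p) (T : ℕ) :
    decayWeight p (T + 1) * (1 + p / T) = decayWeight p T := by
  have : 0 < 1 + p / (T : ℝ) := by positivity
  rw [decayWeight, Finset.prod_range_succ, ← decayWeight, mul_assoc, inv_mul_cancel₀ this.ne',
    mul_one]

/-- `T (T + 1) decayWeight p T` is nonincreasing when `p ≥ 2`, so `T decayWeight p T = O(1 / T)`. -/
theorem decayWeight_antitone (hp : 2 ≤ p) {m : ℕ} (hm : 1 ≤ m) (T : ℕ) (hT : m ≤ T) :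
    T * (T + 1) * decayWeight p T ≤ m * (m + 1) * decayWeight p m := by
  induction T, hT using Nat.le_induction with
  | base => exact le_rfl
  | succ T hT ih =>
    refine le_trans ?_ ih
    have h1 : (1 : ℝ) ≤ T := by exact_mod_cast hm.trans hT
    have h2 := decayWeight_pos (p := p) (by linarith) (T + 1)
    rw [← decayWeight_succ (p := p) (by linarith) T]
    have : (T : ℝ) * (T + 1) * (decayWeight p (T + 1) * (1 + p / T)) =
      (T + 1) * (T + p) * decayWeight p (T + 1) := by field_simp
    rw [this]
    push_cast
    gcongr ?_ * _
    nlinarith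

/-- `T * decayWeight p T` is nonincreasing when `p ≥ 2`. -/
theorem decayWeight_antitone' (hp : 2 ≤ p) {m : ℕ} (hm : 1 ≤ m) (T : ℕ) (hT : m ≤ T) :
    T * decayWeight p T ≤ m * decayWeight p m := by
  have h1 := decayWeight_antitone hp hm T hT
  have h2 : (m : ℝ) ≤ T := by exact_mod_cast hT
  have h3 := decayWeight_pos (p := p) (by linarith) T
  have h4 : (0 : ℝ) ≤ m := by positivity
  by_contra! hcon
  have : (m : ℝ) * (m + 1) * decayWeight p m < T * (T + 1) * decayWeight p T := by
    have h5 := decayWeight_pos (p := p) (by linarith) m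
    calc (m : ℝ) * (m + 1) * decayWeight p m = (m + 1) * (m * decayWeight p m) := by ring
      _ < (m + 1) * (T * decayWeight p T) := by gcongr
      _ ≤ (T + 1) * (T * decayWeight p T) := by gcongr
      _ = _ := by ring
  linarith

/-- Starting from `Φ = 0`, the survival probability is bounded away from `1`, uniformly in the state and
the starting time. With `a = decayWeight p`, the process `a_T (Φ + χ + c1 T)` is a submartingale. It is
negligible at a late time `M` unless `Φ` exceeded `4 K T` before, so the latter has probability
bounded below, and from such states `surv_far` bounds the survival probability by `1 / 2`. -/
theorem IsExpanding.surv_diag (h : IsExpanding w step ball Φ Y χ p c c0 C T0) :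
    ∃ ρ : ℝ, ρ < 1 ∧ ∃ T1 : ℕ, ∀ m ≥ T1, ∃ k : ℕ, ∀ s, Φ m s = 0 →
      surv w step ball k m s ≤ ρ := by
  obtain ⟨K, hK, q, hq, hfar⟩ := h.surv_far
  have hp := h.hp
  have hc0 := h.hc0
  have hC := h.hC
  have hw := h.hw
  have hp2 : 2 ≤ p := hp.le
  have hp0 : 0 ≤ p := by linarith
  set c1 : ℝ := c0 / (2 * p) with hc1
  have hc1pos : 0 < c1 := by positivity
  set C5 : ℝ := 4 * K + 2 * C ^ 2 + C + 2 * c1 with hC5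
  have hC5pos : 0 < C5 := by positivity
  have hC5' : ∀ T : ℝ, 1 ≤ T → 4 * K * T + 2 * C ^ 2 * T + C + 2 * c1 * T ≤ C5 * T := by
    intro T hT
    have : C ≤ C * T := le_mul_of_one_le_right (by linarith) hT
    rw [hC5]; linarith
  obtain ⟨T2, hT2⟩ := exists_nat_ge (2 * p * C / c0)
  refine ⟨1 - c1 / (4 * C5), by linarith [show 0 < c1 / (4 * C5) by positivity],
    max T0 T2, fun m hm => ?_⟩
  have hm0 : T0 ≤ m := (le_max_left _ _).trans hm
  have hm1 : 1 ≤ m := h.hT0.trans hm0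
  have hmR : (1 : ℝ) ≤ m := by exact_mod_cast hm1
  obtain ⟨a, ha⟩ : ∃ a : ℕ → ℝ, a = decayWeight p := ⟨_, rfl⟩
  have hapos : ∀ T, 0 < a T := by rw [ha]; exact decayWeight_pos hp0
  have hapos' := (hapos m).ne'
  have hma : 0 < m * a m := mul_pos (by linarith) (hapos m)
  -- at time `M` the weight `T a_T` is at most `c1 / (2 * C5)` times its value at `m`
  obtain ⟨M, hM⟩ := exists_nat_ge (max (m : ℝ) ((m + 1) * (2 * C5 / c1)))
  have hmM : m ≤ M := by exact_mod_cast (le_max_left _ _).trans hM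
  have hM2 : (m + 1) * (2 * C5 / c1) ≤ M := (le_max_right _ _).trans hM
  -- `k2` further steps make the second term of `surv_far` at most `T`, from any time before `M`
  have hlim : Tendsto (fun k : ℕ => C ^ 3 * ((k : ℕ) : ℝ) ^ (2 - q) * ((M : ℝ) + 1) ^ (q - 1))
      atTop (nhds 0) := by
    have : Tendsto (fun k : ℕ => ((k : ℕ) : ℝ) ^ (2 - q)) atTop (nhds 0) := by
      have := (tendsto_rpow_neg_atTop (show 0 < q - 2 by linarith)).comp
        (tendsto_natCast_atTop_atTop (R := ℝ))
      simpa [Function.comp_def, neg_sub] using this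
    simpa using (this.const_mul (C ^ 3)).mul_const (((M : ℝ) + 1) ^ (q - 1))
  obtain ⟨k2, hk2M, hk2⟩ : ∃ k2 ≥ M, C ^ 3 * ((k2 : ℕ) : ℝ) ^ (2 - q) *
      ((M : ℝ) + 1) ^ (q - 1) ≤ 1 := by
    obtain ⟨n, hn⟩ := eventually_atTop.1 ((hlim.eventually_le_const (show (0:ℝ) < 1 by norm_num)))
    exact ⟨max n M, le_max_right _ _, hn _ (le_max_left _ _)⟩
  obtain ⟨k2, rfl⟩ := Nat.exists_eq_add_of_le hk2M
  have hfar' : ∀ T ≥ T0, ∀ j, T + j = M → ∀ s, 4 * K * T < Φ T s →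
      surv w step ball (j + k2) T s ≤ 1 / 2 := by
    intro T hT j hj s hΦ
    have hT1 : (1 : ℝ) ≤ T := by exact_mod_cast h.hT0.trans hT
    have hpos : 0 < Φ T s := lt_of_le_of_lt (by positivity) hΦ
    refine (hfar (j + k2) T hT s hpos).trans ?_
    rw [show T + (j + k2) = M + k2 by omega, mul_one_div, div_le_iff₀ hpos]
    have e1 : C ^ 3 * ((M + k2 : ℕ) : ℝ) ^ (2 - q) * (T : ℝ) ^ q ≤ T := by
      have : (T : ℝ) ^ q = (T : ℝ) ^ (q - 1) * T := by
        rw [Real.rpow_sub_one (by linarith)]; field_simp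
      rw [this, ← mul_assoc]
      refine mul_le_of_le_one_left (by linarith) (le_trans ?_ hk2)
      have hTM : (T : ℝ) ≤ M := by exact_mod_cast (by omega : T ≤ M)
      have : (T : ℝ) ^ (q - 1) ≤ ((M : ℝ) + 1) ^ (q - 1) :=
        Real.rpow_le_rpow (by linarith) (by linarith) (by linarith)
      gcongr
    nlinarith
  set b : ℝ := 1 / (2 * C5 * (m * a m)) with hb
  have hbpos : 0 < b := by positivity
  set κ : ℝ := M * a M / (2 * (m * a m)) with hκ
  clear_value c1 C5 b κ
  have hκ0 : 0 ≤ κ := by have := hapos M; rw [hκ]; positivity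
  have hκ1 : κ ≤ c1 / (4 * C5) := by
    have e1 := decayWeight_antitone hp2 hm1 M hmM
    rw [← ha] at e1
    have e2 : (m + 1) * (2 * C5) ≤ M * c1 := by
      rw [← mul_div_assoc, div_le_iff₀ hc1pos] at hM2; exact hM2
    rw [hκ, div_le_div_iff₀ (by positivity) (by positivity)]
    have e3 := hapos M
    have e4 := hapos m
    have hMR : (1 : ℝ) ≤ M := by exact_mod_cast hm1.trans hmM
    -- `M (M + 1) a_M ≤ m (m + 1) a_m` and `2 C5 (m + 1) ≤ M c1`
    have e5 : M * a M * (4 * C5) * M ≤ c1 * (2 * (m * a m)) * M := by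
      calc M * a M * (4 * C5) * M ≤ (M * (M + 1) * a M) * (4 * C5) := by
            have : 0 ≤ M * a M * (4 * C5) := by positivity
            linarith
        _ ≤ (m * (m + 1) * a m) * (4 * C5) := by gcongr
        _ = ((m + 1) * (2 * C5)) * (2 * (m * a m)) := by ring
        _ ≤ (M * c1) * (2 * (m * a m)) := by gcongr
        _ = _ := by ring
    exact le_of_mul_le_mul_right e5 (by linarith)
  have hbound : ∀ T ≥ m, ∀ x : ℝ, x ≤ C5 * T → b * (a T * x) ≤ 1 / 2 := by
    intro T hT x hx
    have := decayWeight_antitone' hp2 hm1 T hT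
    rw [← ha] at this
    have e := hapos T
    calc b * (a T * x) ≤ b * (a T * (C5 * T)) := by gcongr
      _ = b * C5 * (T * a T) := by ring
      _ ≤ b * C5 * (m * a m) := by gcongr
      _ = 1 / 2 := by rw [hb]; field_simp
  have hboundM : ∀ x : ℝ, x ≤ C5 * M → b * (a M * x) ≤ κ := by
    intro x hx
    have e := hapos M
    calc b * (a M * x) ≤ b * (a M * (C5 * M)) := by gcongr
      _ = κ := by rw [hb, hκ]; field_simp
  -- backward induction from `M`: states with `Φ > 4 K T` are handled by `surv_far`
  have key : ∀ j T, m ≤ T → T + j = M → ∀ s, Φ T s ≤ 4 * K * T →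
      surv w step ball (j + k2) T s ≤ 1 + κ - b * (a T * (Φ T s + χ s + c1 * T)) := by
    intro j
    induction j with
    | zero =>
      intro T hT hTM s hΦ
      have hTM' : T = M := by omega
      subst hTM'
      have hT1 : (1 : ℝ) ≤ T := by exact_mod_cast hm1.trans hT
      have e1 := (surv_mem_Icc (step := step) hw (0 + k2) T (hm0.trans hT) s).2
      have e2 := hboundM (Φ T s + χ s + c1 * T) (by
        have := h.χ_le s
        have e3 := hC5' T hT1
        have : 0 ≤ C ^ 2 * T := by positivity
        have : 0 ≤ c1 * T := by positivity
        linarith)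
      linarith
    | succ j ih =>
      intro T hT hTM s hΦ
      have hT0 : T0 ≤ T := hm0.trans hT
      have hT1 : (1 : ℝ) ≤ T := by exact_mod_cast hm1.trans hT
      by_cases hs : ball T s
      swap
      · rw [surv_of_not_ball hs]
        have e2 := hbound T hT (Φ T s + χ s + c1 * T) (by
          have := h.χ_le s
          have e3 := hC5' T hT1
          have : 0 ≤ C ^ 2 * T := by positivity
          have : 0 ≤ c1 * T := by positivity
          linarith)
        linarith
      obtain ⟨w0, w1⟩ := hw T hT0 s hs
      have hY0 := h.Y_nonneg T hT0 s hs
      have hY1 := h.Y_le T hT0 s hs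
      rw [show j + 1 + k2 = (j + k2) + 1 by omega, surv_succ_of_ball hs]
      have hsucc : ∀ i, surv w step ball (j + k2) (T + 1) (step s i) ≤
          1 + κ - b * (a (T + 1) * (Φ (T + 1) (step s i) + χ (step s i) + c1 * (T + 1 : ℕ))) := by
        intro i
        by_cases hi : Φ (T + 1) (step s i) ≤ 4 * K * (T + 1 : ℕ)
        · exact ih (T + 1) (by omega) (by omega) _ hi
        · have e1 := hfar' (T + 1) (by omega) j (by omega) _ (not_le.1 hi)
          have e2 := hbound (T + 1) (by omega)
            (Φ (T + 1) (step s i) + χ (step s i) + c1 * (T + 1 : ℕ)) (by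
              have e3 := (abs_le.1 (h.jump T hT0 s hs i)).2
              have e4 := h.χ_le (step s i)
              have e5 : C * (Y T s + 1) ≤ 2 * C ^ 2 * T := by nlinarith
              have e6 := hC5' (T + 1) (by linarith)
              have : 0 ≤ c1 * T := by positivity
              have : 0 ≤ C ^ 2 := by positivity
              push_cast
              linarith)
          linarith
      have hT2' : p * C / T ≤ c0 / 2 := by
        have : (2 * p * C / c0 : ℝ) ≤ T :=
          hT2.trans (by exact_mod_cast (le_max_right _ _).trans (hm.trans hT))
        rw [div_le_iff₀ hc0] at this
        rw [div_le_iff₀ (by linarith)]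
        linarith
      have hsub : (1 + p / T) * (Φ T s + χ s + c1 * T) ≤
          ∑ i, w T s i * (Φ (T + 1) (step s i) + χ (step s i) + c1 * (T + 1 : ℕ)) := by
        have e1 := h.noise T hT0 s hs
        have e2 : ∑ i, w T s i * (Φ (T + 1) (step s i) + χ (step s i) + c1 * (T + 1 : ℕ)) =
            ∑ i, w T s i * (Φ (T + 1) (step s i) + χ (step s i)) + c1 * (T + 1 : ℕ) := by
          simp only [mul_add _ _ (c1 * _), Finset.sum_add_distrib, ← Finset.sum_mul, w1, one_mul]
        rw [e2]
        push_cast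
        have e3 : p / T * χ s ≤ p * C / T := by
          rw [div_mul_eq_mul_div]
          have := h.χ_le s
          gcongr
        have e4 : p / T * (c1 * T) = p * c1 := by field_simp
        have e5 : p * c1 = c0 / 2 := by rw [hc1]; field_simp
        have e6 : (1 + p / T) * (Φ T s + χ s + c1 * T) = (1 + p / T) * Φ T s + χ s +
          p / T * χ s + c1 * T + p / T * (c1 * T) := by ring
        rw [e6]
        linarith
      calc ∑ i, w T s i * surv w step ball (j + k2) (T + 1) (step s i)
          ≤ ∑ i, w T s i * (1 + κ - b * (a (T + 1) *
              (Φ (T + 1) (step s i) + χ (step s i) + c1 * (T + 1 : ℕ)))) :=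
            Finset.sum_le_sum fun i _ => mul_le_mul_of_nonneg_left (hsucc i) (w0 i)
        _ = 1 + κ - b * (a (T + 1) *
              ∑ i, w T s i * (Φ (T + 1) (step s i) + χ (step s i) + c1 * (T + 1 : ℕ))) := by
            simp only [mul_sub _ (1 + κ), Finset.sum_sub_distrib, ← Finset.sum_mul, w1, one_mul]
            congr 1
            rw [Finset.mul_sum, Finset.mul_sum]
            refine Finset.sum_congr rfl fun i _ => by ring
        _ ≤ 1 + κ - b * (a (T + 1) * ((1 + p / T) * (Φ T s + χ s + c1 * T))) := by
            have := hapos (T + 1)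
            gcongr
        _ = _ := by
            rw [← mul_assoc (a (T + 1)), ha, decayWeight_succ hp0]
  refine ⟨(M - m) + k2, fun s hs => ?_⟩
  have := key (M - m) m le_rfl (by omega) s (by rw [hs]; positivity)
  refine this.trans ?_
  have e1 : b * (a m * (Φ m s + χ s + c1 * m)) ≥ c1 / (2 * C5) := by
    have e2 := h.χ_nonneg s
    have e3 := hapos m
    calc b * (a m * (Φ m s + χ s + c1 * m)) ≥ b * (a m * (c1 * m)) := by
          rw [hs]; gcongr; linarith
      _ = c1 / (2 * C5) := by rw [hb]; field_simp
  have e2 : c1 / (2 * C5) = c1 / (4 * C5) + c1 / (4 * C5) := by field_simp; norm_num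
  linarith

end Chain

/-! ### One step of a quadratic form -/

section OneStep

variable {V : Type*} [NormedAddCommGroup V] [NormedSpace ℝ V] {J : Type*} [Fintype J]

/-- The remainder of the expansion in `quad_step`, with `e = ‖y‖ / T` and `τ = 1 / T`. -/
theorem quad_rem_aux {K e τ : ℝ} (hK : 1 ≤ K) (he0 : 0 ≤ e) (hτ0 : 0 ≤ τ) (hτ : τ ≤ 1) :
    (2 * ((1 + K) * e + K) + (e + K)) * (e + K * τ) + 2 * K * e ≤
      (2 * ((1 + K) * (1 + K)) + 4 * K ^ 2) * (e ^ 2 + e + τ) := by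
  have i1 : e * (K * τ) ≤ e * K := by
    have : K * τ ≤ K * 1 := by gcongr
    gcongr; linarith
  have j1 : 3 + 2 * K ≤ 2 * ((1 + K) * (1 + K)) + 4 * K ^ 2 := by nlinarith
  have j2 : 8 * K + 2 * K ^ 2 ≤ 2 * ((1 + K) * (1 + K)) + 4 * K ^ 2 := by
    nlinarith [sq_nonneg (K - 1)]
  have j3 : 3 * K ^ 2 ≤ 2 * ((1 + K) * (1 + K)) + 4 * K ^ 2 := by nlinarith
  have j4 : (3 + 2 * K) * (e * (K * τ)) ≤ (3 + 2 * K) * (e * K) := by gcongr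
  calc _ = (3 + 2 * K) * e ^ 2 + ((3 + 2 * K) * (e * (K * τ)) + 5 * K * e) + 3 * K ^ 2 * τ := by
        ring
    _ ≤ (3 + 2 * K) * e ^ 2 + (8 * K + 2 * K ^ 2) * e + 3 * K ^ 2 * τ := by linarith
    _ ≤ (2 * ((1 + K) * (1 + K)) + 4 * K ^ 2) * e ^ 2 +
        (2 * ((1 + K) * (1 + K)) + 4 * K ^ 2) * e +
        (2 * ((1 + K) * (1 + K)) + 4 * K ^ 2) * τ := by gcongr
    _ = _ := by ring

/-- One step of `y ↦ y + (y + D y) / T + ζ + ρ` with centred `ζ` and small `ρ`: if `B` grows along `D` at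
rate at least `2 s` with margin `c`, the mean of `B(y, y)` grows at rate `(2 + 2 s) / T`, with margin
`c / 2`, and receives the contribution of the noise `ζ`. -/
theorem quad_step {B : V →ₗ[ℝ] V →ₗ[ℝ] ℝ} (hsymm : ∀ x y, B x y = B y x) {D : V →ₗ[ℝ] V}
    {KB K c s : ℝ} (hKB : 0 ≤ KB) (hB : ∀ x y, |B x y| ≤ KB * ‖x‖ * ‖y‖)
    (hK : 1 ≤ K) (hD : ∀ x, ‖D x‖ ≤ K * ‖x‖) (hc : 0 < c)
    (hcoer : ∀ x, 2 * s * B x x + c * ‖x‖ ^ 2 ≤ 2 * B x (D x)) :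
    ∃ C' : ℝ, 0 ≤ C' ∧ ∃ T0 : ℝ, 1 ≤ T0 ∧ ∀ T ≥ T0, ∀ η : ℝ, 0 ≤ η → η ≤ 1 → 8 * KB * η ≤ c →
      ∀ (w : J → ℝ) (y : V) (ζ ρ yn : J → V), (∀ j, 0 ≤ w j) → ∑ j, w j = 1 →
      ∑ j, w j • ζ j = 0 → (∀ j, ‖ζ j‖ ≤ K) → (∀ j, ‖ρ j‖ ≤ (η * ‖y‖ + K) / T) →
      (∀ j, yn j = y + T⁻¹ • (y + D y) + ζ j + ρ j) →
      (1 + (2 + 2 * s) / T) * B y y + c / 2 * ‖y‖ ^ 2 / T + ∑ j, w j * B (ζ j) (ζ j) - C' / T ≤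
        ∑ j, w j * B (yn j) (yn j) := by
  set L : ℝ := KB * (1 + K) ^ 2 + 2 * KB * ((1 + K) * (1 + K)) + 4 * KB * K ^ 2 with hL
  have hL0 : 0 ≤ L := by positivity
  refine ⟨L + 2 * L ^ 2 / c, by positivity, 1 + 8 * L / c, by
    linarith [show 0 ≤ 8 * L / c by positivity], ?_⟩
  intro T hT η hη0 hη1 hη w y ζ ρ yn hw0 hw1 hζ0 hζ hρ hyn
  have hT1 : 1 ≤ T := by linarith [show 0 ≤ 8 * L / c by positivity]
  have hTpos : 0 < T := by linarith
  set n := ‖y‖ with hn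
  have hn0 : 0 ≤ n := norm_nonneg y
  set d := T⁻¹ • (y + D y) with hd
  have hdn : ‖d‖ ≤ (1 + K) * (n / T) := by
    rw [hd, norm_smul, Real.norm_of_nonneg (by positivity)]
    calc T⁻¹ * ‖y + D y‖ ≤ T⁻¹ * (n + K * n) := by
          gcongr; exact (norm_add_le _ _).trans (add_le_add le_rfl (hD y))
      _ = _ := by field_simp
  set e := n / T with he
  have he0 : 0 ≤ e := by positivity
  have hexp : ∀ j, B (yn j) (yn j) = B y y + 2 * B y d + B d d + 2 * B (y + d) (ζ j)
      + B (ζ j) (ζ j) + (2 * B (y + d + ζ j) (ρ j) + B (ρ j) (ρ j)) := by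
    intro j
    rw [hyn j]
    simp only [map_add, LinearMap.add_apply]
    rw [hsymm d y, hsymm (ζ j) y, hsymm (ρ j) y, hsymm (ζ j) d, hsymm (ρ j) d, hsymm (ρ j) (ζ j)]
    ring
  have hBd : -(KB * (1 + K) ^ 2 * e ^ 2) ≤ B d d := by
    have h1 := (abs_le.1 (hB d d)).1
    have h2 : KB * ‖d‖ * ‖d‖ ≤ KB * ((1 + K) * e) * ((1 + K) * e) := by gcongr
    linarith
  have hrem : ∀ j, -(c / 4 * (n ^ 2 / T) + (2 * KB * ((1 + K) * (1 + K)) + 4 * KB * K ^ 2) *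
      (e ^ 2 + e + 1 / T)) ≤ 2 * B (y + d + ζ j) (ρ j) + B (ρ j) (ρ j) := by
    intro j
    have h1 := (abs_le.1 (hB (y + d + ζ j) (ρ j))).1
    have h2 := (abs_le.1 (hB (ρ j) (ρ j))).1
    set r := (η * n + K) / T with hr
    have hr0 : 0 ≤ r := by positivity
    have h3 : ‖y + d + ζ j‖ ≤ n + (1 + K) * e + K :=
      (norm_add_le _ _).trans (add_le_add ((norm_add_le _ _).trans (add_le_add le_rfl hdn)) (hζ j))
    have h4 : KB * ‖y + d + ζ j‖ * ‖ρ j‖ ≤ KB * (n + (1 + K) * e + K) * r := by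
      have := hρ j
      gcongr
    have h5 : KB * ‖ρ j‖ * ‖ρ j‖ ≤ KB * r * r := by
      have := hρ j
      gcongr
    have hr' : r ≤ e + K / T := by
      rw [hr, he, add_div]
      gcongr
      exact mul_le_of_le_one_left hn0 hη1
    have hKT : K / T ≤ K := div_le_self (by linarith) hT1
    have hKT0 : 0 ≤ K / T := by positivity
    -- the main part of the linear term
    have h6 : 2 * KB * n * r ≤ c / 4 * (n ^ 2 / T) + 2 * KB * K * e := by
      have : 2 * KB * n * r = (8 * KB * η) / 4 * (n ^ 2 / T) + 2 * KB * K * e := by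
        rw [hr, he]; field_simp; ring
      rw [this]
      gcongr
    have h7 : 2 * ((1 + K) * e + K) * r + r * r ≤
        (2 * ((1 + K) * e + K) + (e + K)) * (e + K / T) := by
      have : 2 * ((1 + K) * e + K) * r + r * r = (2 * ((1 + K) * e + K) + r) * r := by ring
      rw [this]
      gcongr
      linarith
    have h8 : (2 * ((1 + K) * e + K) + (e + K)) * (e + K / T) + 2 * K * e ≤
        (2 * ((1 + K) * (1 + K)) + 4 * K ^ 2) * (e ^ 2 + e + 1 / T) := by
      have := quad_rem_aux hK he0 (by positivity : 0 ≤ 1 / T)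
        (by rw [div_le_one hTpos]; exact hT1)
      rwa [mul_one_div] at this
    have h9 : KB * (2 * ((1 + K) * e + K) * r + r * r + 2 * K * e) ≤
        KB * ((2 * ((1 + K) * (1 + K)) + 4 * K ^ 2) * (e ^ 2 + e + 1 / T)) := by
      gcongr
      linarith
    have h10 : KB * (n + (1 + K) * e + K) * r * 2 = 2 * KB * n * r +
        KB * (2 * ((1 + K) * e + K) * r) := by ring
    have h11 : KB * (2 * ((1 + K) * e + K) * r + r * r + 2 * K * e) =
        KB * (2 * ((1 + K) * e + K) * r) + KB * r * r + 2 * KB * K * e := by ring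
    have h12 : KB * ((2 * ((1 + K) * (1 + K)) + 4 * K ^ 2) * (e ^ 2 + e + 1 / T)) =
        (2 * KB * ((1 + K) * (1 + K)) + 4 * KB * K ^ 2) * (e ^ 2 + e + 1 / T) := by ring
    linarith
  have hsum : ∑ j, w j * B (yn j) (yn j) = B y y + 2 * B y d + B d d + ∑ j, w j * B (ζ j) (ζ j) +
      ∑ j, w j * (2 * B (y + d + ζ j) (ρ j) + B (ρ j) (ρ j)) := by
    have h0 : ∑ j, w j * B (y + d) (ζ j) = 0 := by
      have : ∑ j, w j * B (y + d) (ζ j) = B (y + d) (∑ j, w j • ζ j) := by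
        rw [map_sum]; simp
      rw [this, hζ0, map_zero]
    calc _ = ∑ j, (w j * (B y y + 2 * B y d + B d d) + 2 * (w j * B (y + d) (ζ j)) +
            w j * B (ζ j) (ζ j) + w j * (2 * B (y + d + ζ j) (ρ j) + B (ρ j) (ρ j))) := by
          refine Finset.sum_congr rfl fun j _ => ?_
          rw [hexp]; ring
      _ = _ := by
          rw [Finset.sum_add_distrib, Finset.sum_add_distrib, Finset.sum_add_distrib,
            ← Finset.sum_mul, ← Finset.mul_sum, hw1, h0]
          ring
  have hrem' : -(c / 4 * (n ^ 2 / T) + (2 * KB * ((1 + K) * (1 + K)) + 4 * KB * K ^ 2) *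
      (e ^ 2 + e + 1 / T)) ≤ ∑ j, w j * (2 * B (y + d + ζ j) (ρ j) + B (ρ j) (ρ j)) := by
    calc _ = ∑ j, w j * -(c / 4 * (n ^ 2 / T) + (2 * KB * ((1 + K) * (1 + K)) + 4 * KB * K ^ 2) *
              (e ^ 2 + e + 1 / T)) := by rw [← Finset.sum_mul, hw1, one_mul]
      _ ≤ _ := Finset.sum_le_sum fun j _ => mul_le_mul_of_nonneg_left (hrem j) (hw0 j)
  have hmain : (2 + 2 * s) / T * B y y + c * (n ^ 2 / T) ≤ 2 * B y d := by
    have h1 : 2 * B y d = (2 * B y y + 2 * B y (D y)) / T := by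
      rw [hd]; simp only [map_add, map_smul, smul_eq_mul]; field_simp
    rw [h1]
    have h2 := hcoer y
    calc _ = (2 * B y y + (2 * s * B y y + c * n ^ 2)) / T := by field_simp; ring
      _ ≤ _ := by gcongr
  have hfin : L * (e ^ 2 + e + 1 / T) ≤ c / 4 * (n ^ 2 / T) + (L + 2 * L ^ 2 / c) / T := by
    have h1 : L * e ^ 2 ≤ c / 8 * (n ^ 2 / T) := by
      have : 8 * L ≤ T * c := by
        rw [← div_le_iff₀ hc]; linarith
      have h2 : L * e ^ 2 = (8 * L / T) / 8 * (n ^ 2 / T) := by rw [he]; field_simp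
      rw [h2]
      have h3 : 8 * L / T ≤ c := by rw [div_le_iff₀ hTpos]; linarith
      gcongr
    have h2 : L * e ≤ c / 8 * (n ^ 2 / T) + 2 * L ^ 2 / c / T := by
      have : L * n ≤ c / 8 * n ^ 2 + 2 * L ^ 2 / c := by
        have h4 : c / 8 * n ^ 2 + 2 * L ^ 2 / c - L * n = (c * n - 4 * L) ^ 2 / (8 * c) := by
          field_simp; ring
        have h5 : 0 ≤ (c * n - 4 * L) ^ 2 / (8 * c) := by positivity
        linarith
      calc L * e = (L * n) / T := by rw [he]; ring
        _ ≤ (c / 8 * n ^ 2 + 2 * L ^ 2 / c) / T := by gcongr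
        _ = _ := by ring
    rw [add_div]
    have : L * (e ^ 2 + e + 1 / T) = L * e ^ 2 + L * e + L / T := by ring
    rw [this]; linarith
  have hBd' : -(KB * (1 + K) ^ 2 * (e ^ 2 + e + 1 / T)) ≤ B d d := by
    have : 0 ≤ KB * (1 + K) ^ 2 * (e + 1 / T) := by positivity
    linarith
  have hLexp : L * (e ^ 2 + e + 1 / T) = KB * (1 + K) ^ 2 * (e ^ 2 + e + 1 / T) +
      (2 * KB * ((1 + K) * (1 + K)) + 4 * KB * K ^ 2) * (e ^ 2 + e + 1 / T) := by rw [hL]; ring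
  rw [hsum]
  have hc2 : c / 2 * n ^ 2 / T = c / 2 * (n ^ 2 / T) := by ring
  rw [hc2, add_mul, one_mul]
  linarith

end OneStep

/-! ### Two copies of the chain near an equilibrium -/

section LocalModel

set_option linter.unusedSectionVars false

variable {ι : Type*} [Fintype ι] [DecidableEq ι]

/-- The empirical measure at time `T` of a state `s = (counts, position)`. The counts of a state at time
`T` are meant to add up to `T`. -/
noncomputable def emp (T : ℕ) (s : (ι → ℕ) × ι) : ι → ℝ := fun i => (s.1 i : ℝ) / T

/-- Transition probabilities of the self-interacting chain: `M v` is the transition matrix when the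
empirical measure is `v`. -/
noncomputable def empW (M : (ι → ℝ) → ι → ι → ℝ) : ℕ → (ι → ℕ) × ι → ι → ℝ :=
  fun T s j => M (emp T s) s.2 j

/-- A visit to `j`. -/
def empStep (s : (ι → ℕ) × ι) (j : ι) : (ι → ℕ) × ι := (s.1 + Pi.single j 1, j)

/-- The empirical measure is close to `vstar`. The radius is `r / 2`, so that after one more step it is
still within `r` for large `T`. -/
def empBall (vstar : ι → ℝ) (r : ℝ) (T : ℕ) (s : (ι → ℕ) × ι) : Prop :=
  dist (emp T s) vstar < r / 2

/-- The martingale increment `Q(j) - (P Q)(x)` of a move from `x` to `j`, where `P = M v` and `Q` solves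
the Poisson equation of `P`. -/
def mgJump (M : (ι → ℝ) → ι → ι → ℝ) (Q : (ι → ℝ) → ι → ι → ℝ) (v : ι → ℝ) (x j : ι) : ι → ℝ :=
  Q v j - ∑ k, M v x k • Q v k

/-- What is used about the chain in the ball of radius `r` around `vstar`: `M v` is a stochastic matrix,
`Q v` is a bounded and Lipschitz solution of its Poisson equation with stationary measure `π v`, the
field `π v - v` has differential `D` up to an error `η`, the symmetric form `B` grows along `D` at rate
at least `2 s` with margin `c`, and the noise increases `B` by at least `c0` in mean, up to the
corrector `χ`. -/
structure LocalModel (vstar : ι → ℝ) (r : ℝ) (M : (ι → ℝ) → ι → ι → ℝ)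
    (π : (ι → ℝ) → ι → ℝ) (Q : (ι → ℝ) → ι → ι → ℝ) (D : (ι → ℝ) →ₗ[ℝ] ι → ℝ)
    (B : (ι → ℝ) →ₗ[ℝ] (ι → ℝ) →ₗ[ℝ] ℝ) (χ : ι → ℝ) (s c KB K η c0 : ℝ) : Prop where
  hr : 0 < r
  hs : 0 < s
  hc : 0 < c
  hc0 : 0 < c0
  hKB : 0 ≤ KB
  hK : 1 ≤ K
  hη0 : 0 ≤ η
  hη1 : η ≤ 1
  hη : 8 * KB * η ≤ c
  B_symm : ∀ x y, B x y = B y x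
  B_le : ∀ x y, |B x y| ≤ KB * ‖x‖ * ‖y‖
  D_le : ∀ x, ‖D x‖ ≤ K * ‖x‖
  coer : ∀ x, 2 * s * B x x + c * ‖x‖ ^ 2 ≤ 2 * B x (D x)
  norm_le : ∀ v ∈ Metric.ball vstar r, ‖v‖ ≤ K
  M_nonneg : ∀ v ∈ Metric.ball vstar r, (∀ i, 0 ≤ v i) → ∀ x j, 0 ≤ M v x j
  M_sum : ∀ v ∈ Metric.ball vstar r, ∀ x, ∑ j, M v x j = 1
  poisson : ∀ v ∈ Metric.ball vstar r, ∀ x,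
    Q v x - ∑ j, M v x j • Q v j = Pi.single x 1 - π v
  Q_le : ∀ v ∈ Metric.ball vstar r, ∀ x, ‖Q v x‖ ≤ K
  Q_lip : ∀ v ∈ Metric.ball vstar r, ∀ v' ∈ Metric.ball vstar r, ∀ x,
    ‖Q v x - Q v' x‖ ≤ K * ‖v - v'‖
  lin : ∀ v ∈ Metric.ball vstar r, ∀ v' ∈ Metric.ball vstar r,
    ‖π v - π v' - (v - v') - D (v - v')‖ ≤ η * ‖v - v'‖
  noise : ∀ v ∈ Metric.ball vstar r, ∀ x,
    χ x + c0 ≤ ∑ j, M v x j * (B (mgJump M Q v x j) (mgJump M Q v x j) + χ j)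
  χ_nonneg : ∀ x, 0 ≤ χ x

/-- The counts corrected by the solution of the Poisson equation. By the Poisson
equation the correction `Q(x) - δ_x` equals `P Q(x) - π`. -/
noncomputable def corr (Q : (ι → ℝ) → ι → ι → ℝ) (T : ℕ) (s : (ι → ℕ) × ι) : ι → ℝ :=
  (fun i => (s.1 i : ℝ)) + Q (emp T s) s.2 - Pi.single s.2 1

theorem emp_smul {T : ℕ} (hT : 1 ≤ T) (s : (ι → ℕ) × ι) :
    (T : ℝ) • emp T s = fun i => (s.1 i : ℝ) := by
  have : (T : ℝ) ≠ 0 := by positivity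
  ext i
  simp only [emp, Pi.smul_apply, smul_eq_mul]
  field_simp

theorem emp_step_sub {T : ℕ} (hT : 1 ≤ T) (s : (ι → ℕ) × ι) (j : ι) :
    emp (T + 1) (empStep s j) - emp T s =
      ((T : ℝ) + 1)⁻¹ • ((Pi.single j 1 : ι → ℝ) - emp T s) := by
  have : (T : ℝ) ≠ 0 := by positivity
  have h2 : (T : ℝ) + 1 ≠ 0 := by positivity
  ext i
  have : (((Pi.single j 1 : ι → ℕ) i : ℕ) : ℝ) = (Pi.single j 1 : ι → ℝ) i := by
    by_cases h : i = j
    · subst h; simp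
    · simp [h]
  simp only [emp, empStep, Pi.smul_apply, smul_eq_mul, Pi.sub_apply, Pi.add_apply, Nat.cast_add,
    Nat.cast_one, this]
  field_simp
  ring

theorem norm_single_one_le (j : ι) : ‖(Pi.single j 1 : ι → ℝ)‖ ≤ 1 := by
  simp [Pi.norm_single]

theorem sum_prod_mul {J : Type*} [Fintype J] (a b : J → ℝ) (f g : J → ℝ) (ha : ∑ j, a j = 1) (hb : ∑ j, b j = 1) :
    ∑ j : J × J, a j.1 * b j.2 * (f j.1 + g j.2) = ∑ j, a j * f j + ∑ j, b j * g j := by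
  rw [Fintype.sum_prod_type]
  calc _ = ∑ x, ∑ y, (a x * f x * b y + a x * (b y * g y)) := by
        refine Finset.sum_congr rfl fun x _ => Finset.sum_congr rfl fun y _ => ?_
        dsimp only
        ring
    _ = ∑ x, (a x * f x + a x * ∑ y, b y * g y) := by
        refine Finset.sum_congr rfl fun x _ => ?_
        rw [Finset.sum_add_distrib, ← Finset.mul_sum, ← Finset.mul_sum, hb, mul_one]
    _ = _ := by rw [Finset.sum_add_distrib, ← Finset.sum_mul, ha, one_mul]

theorem sum_prod_smul_sub {J : Type*} [Fintype J] (a b : J → ℝ) (f g : J → ι → ℝ) (ha : ∑ j, a j = 1)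
    (hb : ∑ j, b j = 1) (hf : ∑ j, a j • f j = 0) (hg : ∑ j, b j • g j = 0) :
    ∑ j : J × J, (a j.1 * b j.2) • (f j.1 - g j.2) = 0 := by
  ext i
  have h := sum_prod_mul a b (fun j => f j i) (fun j => - g j i) ha hb
  have hf' := congrFun hf i
  have hg' := congrFun hg i
  simp only [Finset.sum_apply, Pi.smul_apply, smul_eq_mul, Pi.zero_apply, mul_neg, Finset.sum_neg_distrib] at hf' hg' h
  rw [hf', hg'] at h
  simpa [Finset.sum_apply, sub_eq_add_neg, mul_add] using h

variable {vstar : ι → ℝ} {r : ℝ} {M : (ι → ℝ) → ι → ι → ℝ}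
    {π : (ι → ℝ) → ι → ℝ} {Q : (ι → ℝ) → ι → ι → ℝ} {D : (ι → ℝ) →ₗ[ℝ] ι → ℝ}
    {B : (ι → ℝ) →ₗ[ℝ] (ι → ℝ) →ₗ[ℝ] ℝ} {χ : ι → ℝ} {s c KB K η c0 : ℝ}

theorem mgJump_sum {v : ι → ℝ} {x : ι} (h : ∑ j, M v x j = 1) :
    ∑ j, M v x j • mgJump M Q v x j = 0 := by
  simp only [mgJump, smul_sub]
  rw [Finset.sum_sub_distrib, ← Finset.sum_smul, h, one_smul, sub_self]

theorem LocalModel.norm_mgJump (h : LocalModel vstar r M π Q D B χ s c KB K η c0) {v : ι → ℝ}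
    (hv : v ∈ Metric.ball vstar r) (hv0 : ∀ i, 0 ≤ v i) (x j : ι) : ‖mgJump M Q v x j‖ ≤ 2 * K := by
  have h1 : ‖∑ k, M v x k • Q v k‖ ≤ K := by
    calc _ ≤ ∑ k, ‖M v x k • Q v k‖ := norm_sum_le _ _
      _ ≤ ∑ k, M v x k * K := by
          refine Finset.sum_le_sum fun k _ => ?_
          rw [norm_smul, Real.norm_of_nonneg (h.M_nonneg v hv hv0 x k)]
          exact mul_le_mul_of_nonneg_left (h.Q_le v hv k) (h.M_nonneg v hv hv0 x k)
      _ = K := by rw [← Finset.sum_mul, h.M_sum v hv, one_mul]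
  calc _ ≤ ‖Q v j‖ + ‖∑ k, M v x k • Q v k‖ := norm_sub_le _ _
    _ ≤ 2 * K := by linarith [h.Q_le v hv j]

theorem emp_nonneg (T : ℕ) (s : (ι → ℕ) × ι) (i : ι) : 0 ≤ emp T s i := by
  unfold emp; positivity

/-- The corrected counts move by `π`, a martingale increment, and the variation of `Q` along one step of
the empirical measure. -/
theorem LocalModel.corr_step (h : LocalModel vstar r M π Q D B χ s c KB K η c0) {T : ℕ}
    {σ : (ι → ℕ) × ι} (hσ : emp T σ ∈ Metric.ball vstar r) (j : ι) :
    corr Q (T + 1) (empStep σ j) = corr Q T σ + π (emp T σ) + mgJump M Q (emp T σ) σ.2 j +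
      (Q (emp (T + 1) (empStep σ j)) j - Q (emp T σ) j) := by
  have hp := h.poisson _ hσ σ.2
  have hc : (fun i => ((empStep σ j).1 i : ℝ)) = (fun i => (σ.1 i : ℝ)) + Pi.single j 1 := by
    ext i
    by_cases hi : i = j
    · subst hi; simp [empStep]
    · simp [hi, empStep]
  have h2 : (empStep σ j).2 = j := rfl
  have hp' : π (emp T σ) = Pi.single σ.2 1 - Q (emp T σ) σ.2 +
      ∑ j, M (emp T σ) σ.2 j • Q (emp T σ) j := by
    rw [sub_eq_iff_eq_add] at hp
    rw [hp]; abel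
  rw [corr, corr, hc, h2, hp', mgJump]
  abel

/-- Evolution of the difference `y` of the corrected counts of two copies: `y ↦ y + (y + D y) / T + ζ + ρ`,
where `ζ` is the difference of the martingale increments and `ρ` collects the linearization error and
the variations of `Q`. -/
theorem LocalModel.pair_step (h : LocalModel vstar r M π Q D B χ s c KB K η c0) :
    ∃ K' : ℝ, 1 ≤ K' ∧ K ≤ K' ∧ ∃ T0 : ℕ, 1 ≤ T0 ∧ ∀ T ≥ T0,
      ∀ σ, pairBall (empBall vstar r) T σ →
      ‖corr Q T σ.1 - corr Q T σ.2‖ ≤ K' * T ∧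
      ∃ ζ ρ : ι × ι → ι → ℝ, (∀ j, ζ j = mgJump M Q (emp T σ.1) σ.1.2 j.1 -
          mgJump M Q (emp T σ.2) σ.2.2 j.2) ∧
        (∀ j, ‖ζ j‖ ≤ K') ∧
        (∀ j, ‖ρ j‖ ≤ (η * ‖corr Q T σ.1 - corr Q T σ.2‖ + K') / T) ∧
        ∀ j, corr Q (T + 1) (empStep σ.1 j.1) - corr Q (T + 1) (empStep σ.2 j.2) =
          (corr Q T σ.1 - corr Q T σ.2) + (T : ℝ)⁻¹ • ((corr Q T σ.1 - corr Q T σ.2) +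
            D (corr Q T σ.1 - corr Q T σ.2)) + ζ j + ρ j := by
  have hK := h.hK
  have hr := h.hr
  refine ⟨6 * (1 + K) ^ 2 + r, by nlinarith, by nlinarith, ⌈2 * (1 + K) / r⌉₊ + 1, by omega, ?_⟩
  rintro T hT ⟨σ, σ'⟩ ⟨hσ, hσ'⟩
  simp only [] at hσ hσ' ⊢
  have hT1 : 1 ≤ T := by omega
  have hTr : (1 : ℝ) ≤ T := by exact_mod_cast hT1
  have hTpos : (0 : ℝ) < T := by linarith
  have hTK : (1 + K) / (T + 1) < r / 2 := by
    have h1 : 2 * (1 + K) / r ≤ ⌈2 * (1 + K) / r⌉₊ := Nat.le_ceil _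
    have h2 : ((⌈2 * (1 + K) / r⌉₊ : ℕ) : ℝ) + 1 ≤ T := by exact_mod_cast hT
    have h3 : 2 * (1 + K) / r < T + 1 := by linarith
    rw [div_lt_iff₀ hr] at h3
    rw [div_lt_iff₀ (by linarith)]
    linarith
  have hmem : ∀ τ, empBall vstar r T τ → emp T τ ∈ Metric.ball vstar r := fun τ hτ => by
    rw [Metric.mem_ball]; unfold empBall at hτ; linarith
  -- one step moves the empirical measure by `O(1/T)`
  have hmove : ∀ τ, empBall vstar r T τ → ∀ j,
      ‖emp (T + 1) (empStep τ j) - emp T τ‖ ≤ (1 + K) / (T + 1) := by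
    intro τ hτ j
    rw [emp_step_sub hT1, norm_smul, Real.norm_of_nonneg (by positivity), inv_mul_eq_div]
    gcongr
    exact (norm_sub_le _ _).trans (add_le_add (norm_single_one_le j) (h.norm_le _ (hmem τ hτ)))
  have hmem' : ∀ τ, empBall vstar r T τ → ∀ j,
      emp (T + 1) (empStep τ j) ∈ Metric.ball vstar r := fun τ hτ j => by
    rw [Metric.mem_ball]
    calc _ ≤ dist (emp (T + 1) (empStep τ j)) (emp T τ) + dist (emp T τ) vstar :=
          dist_triangle _ _ _
      _ < r / 2 + r / 2 := add_lt_add_of_le_of_lt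
          (by rw [dist_eq_norm]; linarith [hmove τ hτ j]) hτ
      _ = r := by ring
  have hdQ : ∀ τ, empBall vstar r T τ → ∀ j,
      ‖Q (emp (T + 1) (empStep τ j)) j - Q (emp T τ) j‖ ≤ K * (1 + K) / T := by
    intro τ hτ j
    calc _ ≤ K * ‖emp (T + 1) (empStep τ j) - emp T τ‖ :=
          h.Q_lip _ (hmem' τ hτ j) _ (hmem τ hτ) j
      _ ≤ K * ((1 + K) / T) := by
          gcongr
          refine (hmove τ hτ j).trans ?_
          gcongr
          linarith
      _ = _ := by ring
  set v := emp T σ with hv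
  set v' := emp T σ' with hv'
  set y := corr Q T σ - corr Q T σ' with hy
  set b : ι → ℝ := Q v σ.2 - Pi.single σ.2 1 - (Q v' σ'.2 - Pi.single σ'.2 1) with hb
  have hbn : ‖b‖ ≤ 2 * K + 2 := by
    have := h.Q_le _ (hmem σ hσ) σ.2
    have := h.Q_le _ (hmem σ' hσ') σ'.2
    have := norm_single_one_le σ.2
    have := norm_single_one_le σ'.2
    have h1 := norm_sub_le (Q v σ.2 - Pi.single σ.2 1) (Q v' σ'.2 - Pi.single σ'.2 1)
    have h2 := norm_sub_le (Q v σ.2) (Pi.single σ.2 1)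
    have h3 := norm_sub_le (Q v' σ'.2) (Pi.single σ'.2 1)
    linarith
  have hyv : y = (T : ℝ) • (v - v') + b := by
    rw [hy, corr, corr, ← emp_smul hT1, ← emp_smul hT1, ← hv, ← hv', smul_sub, hb]
    abel
  have hTy : (T : ℝ)⁻¹ • y = (v - v') + (T : ℝ)⁻¹ • b := by
    rw [hyv, smul_add, smul_smul, inv_mul_cancel₀ hTpos.ne', one_smul]
  have hvv : ‖v - v'‖ ≤ (‖y‖ + (2 * K + 2)) / T := by
    have : v - v' = (T : ℝ)⁻¹ • (y - b) := by rw [smul_sub, hTy]; abel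
    rw [this, norm_smul, Real.norm_of_nonneg (by positivity), inv_mul_eq_div]
    gcongr
    exact (norm_sub_le _ _).trans (by linarith)
  have hvr : ‖v - v'‖ ≤ r := by
    rw [← dist_eq_norm]
    calc dist v v' ≤ dist v vstar + dist v' vstar := dist_triangle_right _ _ _
      _ ≤ r := by unfold empBall at hσ hσ'; rw [← hv] at hσ; rw [← hv'] at hσ'; linarith
  refine ⟨?_, fun j => mgJump M Q v σ.2 j.1 - mgJump M Q v' σ'.2 j.2,
    fun j => (π v - π v' - (v - v') - D (v - v')) - (T : ℝ)⁻¹ • (b + D b) +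
      ((Q (emp (T + 1) (empStep σ j.1)) j.1 - Q v j.1) -
        (Q (emp (T + 1) (empStep σ' j.2)) j.2 - Q v' j.2)), fun j => rfl, ?_, ?_, ?_⟩
  · rw [hyv]
    calc _ ≤ ‖(T : ℝ) • (v - v')‖ + ‖b‖ := norm_add_le _ _
      _ ≤ T * r + (2 * K + 2) * T := by
          rw [norm_smul, Real.norm_of_nonneg hTpos.le]
          have : 2 * K + 2 ≤ (2 * K + 2) * T := le_mul_of_one_le_right (by linarith) hTr
          have := mul_le_mul_of_nonneg_left hvr hTpos.le
          linarith
      _ = (r + (2 * K + 2)) * T := by ring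
      _ ≤ _ := by
          gcongr ?_ * _
          nlinarith
  · intro j
    have h1 := h.norm_mgJump (hmem σ hσ) (emp_nonneg T σ) σ.2 j.1
    have h2 := h.norm_mgJump (hmem σ' hσ') (emp_nonneg T σ') σ'.2 j.2
    refine (norm_sub_le _ _).trans ?_
    calc _ ≤ 2 * K + 2 * K := add_le_add h1 h2
      _ ≤ _ := by nlinarith
  · intro j
    have h1 := h.lin _ (hmem σ hσ) _ (hmem σ' hσ')
    have h2 : ‖(T : ℝ)⁻¹ • (b + D b)‖ ≤ (1 + K) * (2 * K + 2) / T := by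
      rw [norm_smul, Real.norm_of_nonneg (by positivity), inv_mul_eq_div]
      gcongr
      calc _ ≤ ‖b‖ + ‖D b‖ := norm_add_le _ _
        _ ≤ ‖b‖ + K * ‖b‖ := by gcongr; exact h.D_le b
        _ = (1 + K) * ‖b‖ := by ring
        _ ≤ _ := by gcongr
    have h3 : η * ‖v - v'‖ ≤ (η * ‖y‖ + (2 * K + 2)) / T := by
      calc _ ≤ η * ((‖y‖ + (2 * K + 2)) / T) := mul_le_mul_of_nonneg_left hvv h.hη0
        _ = (η * ‖y‖ + η * (2 * K + 2)) / T := by ring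
        _ ≤ _ := by
          gcongr
          exact mul_le_of_le_one_left (by linarith) h.hη1
    have h4 := hdQ σ hσ j.1
    have h5 := hdQ σ' hσ' j.2
    calc _ ≤ ‖π v - π v' - (v - v') - D (v - v')‖ + ‖(T : ℝ)⁻¹ • (b + D b)‖ +
          (‖Q (emp (T + 1) (empStep σ j.1)) j.1 - Q v j.1‖ +
            ‖Q (emp (T + 1) (empStep σ' j.2)) j.2 - Q v' j.2‖) :=
          (norm_add_le _ _).trans (add_le_add (norm_sub_le _ _) (norm_sub_le _ _))
      _ ≤ (η * ‖y‖ + (2 * K + 2)) / T + (1 + K) * (2 * K + 2) / T +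
          (K * (1 + K) / T + K * (1 + K) / T) := by
          linarith
      _ = (η * ‖y‖ + ((2 * K + 2) + (1 + K) * (2 * K + 2) + 2 * K * (1 + K))) / T := by ring
      _ ≤ _ := by
          gcongr ?_ / _
          nlinarith
  · intro j
    rw [h.corr_step (hmem σ hσ), h.corr_step (hmem σ' hσ'), smul_add, ← map_smul, hTy, map_add,
      map_smul, smul_add, ← hv, ← hv', hy]
    dsimp only
    generalize D (v - v') = z
    abel

/-- Difference of the corrected counts of two copies. It vanishes when they are in the same state. -/
noncomputable def corrDiff (Q : (ι → ℝ) → ι → ι → ℝ) (T : ℕ) (σ : ((ι → ℕ) × ι) × ((ι → ℕ) × ι)) :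
    ι → ℝ := corr Q T σ.1 - corr Q T σ.2

/-- Near `vstar`, the form `B` evaluated at the difference of two copies is expanding. The rate
`2 + 2 s` exceeds `2` because `s > 0`. -/
theorem LocalModel.isExpanding (h : LocalModel vstar r M π Q D B χ s c KB K η c0) :
    ∃ (C : ℝ) (T0 : ℕ), IsExpanding (pairW (empW M)) (pairStep empStep) (pairBall (empBall vstar r))
      (fun T σ => B (corrDiff Q T σ) (corrDiff Q T σ)) (fun T σ => ‖corrDiff Q T σ‖)
      (fun σ => χ σ.1.2 + χ σ.2.2) (2 + 2 * s) (c / 2) c0 C T0 := by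
  obtain ⟨K', hK'1, hKK', T1, hT1, hstep⟩ := h.pair_step
  have hs := h.hs
  have hc := h.hc
  have hc0 := h.hc0
  have hKB := h.hKB
  have hr := h.hr
  obtain ⟨C', hC', T2, hT2, hquad⟩ := quad_step (J := ι × ι) h.B_symm h.hKB h.B_le hK'1
    (fun x => (h.D_le x).trans (by gcongr)) h.hc h.coer
  set C2 : ℝ := (1 + K') * K' + K' + (K' + K') with hC2
  have hC20 : 0 ≤ C2 := by positivity
  set X : ℝ := ∑ i, χ i with hX
  have hX0 : 0 ≤ X := Finset.sum_nonneg fun i _ => h.χ_nonneg i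
  have hXi : ∀ i, χ i ≤ X := fun i =>
    Finset.single_le_sum (f := χ) (fun i _ => h.χ_nonneg i) (Finset.mem_univ i)
  have hmem : ∀ T τ, empBall vstar r T τ → emp T τ ∈ Metric.ball vstar r := fun T τ hτ => by
    rw [Metric.mem_ball]; unfold empBall at hτ; linarith
  have hw : ∀ (T : ℕ) σ, pairBall (empBall vstar r) T σ → (∀ j, 0 ≤ pairW (empW M) T σ j) ∧
      ∑ j, pairW (empW M) T σ j = 1 := by
    rintro T ⟨σ, σ'⟩ ⟨h1, h2⟩
    refine ⟨fun j => mul_nonneg (h.M_nonneg _ (hmem T _ h1) (emp_nonneg T _) _ _)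
      (h.M_nonneg _ (hmem T _ h2) (emp_nonneg T _) _ _), ?_⟩
    simp only [pairW, empW]
    rw [Fintype.sum_prod_type, ← Finset.sum_mul_sum, h.M_sum _ (hmem T _ h1),
      h.M_sum _ (hmem T _ h2), one_mul]
  -- the expansion of the quadratic form along one step, with `Σ w B(ζ, ζ)` still unestimated
  have hmain : ∀ T ≥ T1, T2 ≤ T → ∀ σ, pairBall (empBall vstar r) T σ →
      (1 + (2 + 2 * s) / T) * B (corrDiff Q T σ) (corrDiff Q T σ) +
        c / 2 * ‖corrDiff Q T σ‖ ^ 2 / T +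
        (∑ j, M (emp T σ.1) σ.1.2 j * B (mgJump M Q (emp T σ.1) σ.1.2 j)
          (mgJump M Q (emp T σ.1) σ.1.2 j) +
         ∑ j, M (emp T σ.2) σ.2.2 j * B (mgJump M Q (emp T σ.2) σ.2.2 j)
          (mgJump M Q (emp T σ.2) σ.2.2 j)) - C' / T ≤
        ∑ j, pairW (empW M) T σ j * B (corrDiff Q (T + 1) (pairStep empStep σ j))
          (corrDiff Q (T + 1) (pairStep empStep σ j)) := by
    intro T hT hT2' σ hσ
    obtain ⟨-, ζ, ρ, hζ, hζn, hρn, hy⟩ := hstep T hT σ hσ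
    obtain ⟨hw0, hw1⟩ := hw T σ hσ
    have hM1 := h.M_sum _ (hmem T _ hσ.1) σ.1.2
    have hM2 := h.M_sum _ (hmem T _ hσ.2) σ.2.2
    have hz1 := mgJump_sum (Q := Q) hM1
    have hz2 := mgJump_sum (Q := Q) hM2
    have hζ0 : ∑ j, pairW (empW M) T σ j • ζ j = 0 := by
      simp only [hζ, pairW, empW]
      exact sum_prod_smul_sub _ _ _ _ hM1 hM2 hz1 hz2
    have hζζ : ∑ j, pairW (empW M) T σ j * B (ζ j) (ζ j) =
        ∑ j, M (emp T σ.1) σ.1.2 j * B (mgJump M Q (emp T σ.1) σ.1.2 j)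
          (mgJump M Q (emp T σ.1) σ.1.2 j) +
        ∑ j, M (emp T σ.2) σ.2.2 j * B (mgJump M Q (emp T σ.2) σ.2.2 j)
          (mgJump M Q (emp T σ.2) σ.2.2 j) := by
      rw [← sum_prod_mul _ _ _ _ hM1 hM2]
      have hx : ∑ j : ι × ι, pairW (empW M) T σ j *
          B (mgJump M Q (emp T σ.1) σ.1.2 j.1) (mgJump M Q (emp T σ.2) σ.2.2 j.2) = 0 := by
        simp only [pairW, empW]
        rw [Fintype.sum_prod_type]
        refine Finset.sum_eq_zero fun i _ => ?_
        have : ∑ k, M (emp T σ.1) σ.1.2 i * M (emp T σ.2) σ.2.2 k *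
            B (mgJump M Q (emp T σ.1) σ.1.2 i) (mgJump M Q (emp T σ.2) σ.2.2 k) =
            M (emp T σ.1) σ.1.2 i * B (mgJump M Q (emp T σ.1) σ.1.2 i)
              (∑ k, M (emp T σ.2) σ.2.2 k • mgJump M Q (emp T σ.2) σ.2.2 k) := by
          rw [map_sum, Finset.mul_sum]
          refine Finset.sum_congr rfl fun k _ => ?_
          rw [map_smul, smul_eq_mul]; ring
        rw [this, hz2, map_zero, mul_zero]
      rw [← sub_zero (∑ j, pairW (empW M) T σ j * B (ζ j) (ζ j)), ← mul_zero (-2 : ℝ), ← hx,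
        Finset.mul_sum, ← Finset.sum_sub_distrib]
      refine Finset.sum_congr rfl fun j _ => ?_
      rw [hζ j]
      simp only [map_sub, LinearMap.sub_apply]
      rw [h.B_symm (mgJump M Q (emp T σ.2) σ.2.2 j.2) (mgJump M Q (emp T σ.1) σ.1.2 j.1)]
      simp only [pairW, empW]
      ring
    have := hquad T hT2' η h.hη0 h.hη1 h.hη (fun j => pairW (empW M) T σ j) (corrDiff Q T σ) ζ ρ
      (fun j => corrDiff Q (T + 1) (pairStep empStep σ j)) hw0 hw1 hζ0 hζn hρn hy
    rw [hζζ] at this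
    exact this
  set T0 : ℕ := T1 + ⌈T2⌉₊ + ⌈C' / c0⌉₊ with hT0
  have hTT : ∀ T ≥ T0, T1 ≤ T ∧ T2 ≤ T ∧ C' / T ≤ c0 ∧ C' / T ≤ C' := by
    intro T hT
    have h1 : T2 ≤ (⌈T2⌉₊ : ℝ) := Nat.le_ceil _
    have h2 : C' / c0 ≤ (⌈C' / c0⌉₊ : ℝ) := Nat.le_ceil _
    have h3 : (T1 : ℝ) + ⌈T2⌉₊ + ⌈C' / c0⌉₊ ≤ T := by exact_mod_cast hT
    have h4 : (1 : ℝ) ≤ T1 := by exact_mod_cast hT1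
    have h5 : (0 : ℝ) ≤ (⌈T2⌉₊ : ℝ) := by positivity
    have h6 : (0 : ℝ) ≤ (⌈C' / c0⌉₊ : ℝ) := by positivity
    refine ⟨by omega, by linarith, ?_, div_le_self hC' (by linarith)⟩
    rw [div_le_iff₀ (by linarith), mul_comm, ← div_le_iff₀ hc0]
    linarith
  refine ⟨1 + KB + K' + 2 * X + KB * C2 * (C2 + 2) + (C' + 2 * (KB * (2 * K) * (2 * K))), T0,
    by linarith, by linarith, hc0, ?_, by omega, fun T _ => hw T, ?_, ?_, ?_, ?_, ?_, ?_, ?_, ?_⟩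
  · have : 0 ≤ KB * C2 * (C2 + 2) + (C' + 2 * (KB * (2 * K) * (2 * K))) := by
      have := h.hK
      positivity
    linarith
  · intro T hT σ hσ
    obtain ⟨a1, a2, a3, a4⟩ := hTT T hT
    have hm := hmain T a1 a2 σ hσ
    have hlow : ∀ τ, empBall vstar r T τ → -(KB * (2 * K) * (2 * K)) ≤
        ∑ j, M (emp T τ) τ.2 j * B (mgJump M Q (emp T τ) τ.2 j) (mgJump M Q (emp T τ) τ.2 j) := by
      intro τ hτ
      have hK := h.hK
      calc _ = ∑ j, M (emp T τ) τ.2 j * -(KB * (2 * K) * (2 * K)) := by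
            rw [← Finset.sum_mul, h.M_sum _ (hmem T _ hτ), one_mul]
        _ ≤ _ := by
            refine Finset.sum_le_sum fun j _ => mul_le_mul_of_nonneg_left ?_
              (h.M_nonneg _ (hmem T _ hτ) (emp_nonneg T _) _ _)
            have h1 := (abs_le.1 (h.B_le (mgJump M Q (emp T τ) τ.2 j)
              (mgJump M Q (emp T τ) τ.2 j))).1
            have h2 := h.norm_mgJump (hmem T _ hτ) (emp_nonneg T _) τ.2 j
            have h3 : KB * ‖mgJump M Q (emp T τ) τ.2 j‖ * ‖mgJump M Q (emp T τ) τ.2 j‖ ≤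
              KB * (2 * K) * (2 * K) := by gcongr
            linarith
    have b1 := hlow _ hσ.1
    have b2 := hlow _ hσ.2
    have b3 : 0 ≤ KB * C2 * (C2 + 2) := by positivity
    linarith
  · intro T hT σ hσ
    obtain ⟨a1, a2, a3, a4⟩ := hTT T hT
    have hm := hmain T a1 a2 σ hσ
    have n1 := h.noise _ (hmem T _ hσ.1) σ.1.2
    have n2 := h.noise _ (hmem T _ hσ.2) σ.2.2
    simp only [mul_add, Finset.sum_add_distrib] at n1 n2 ⊢
    have hχ := sum_prod_mul (M (emp T σ.1) σ.1.2) (M (emp T σ.2) σ.2.2) χ χ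
      (h.M_sum _ (hmem T _ hσ.1) σ.1.2) (h.M_sum _ (hmem T _ hσ.2) σ.2.2)
    have hχ' : ∑ j, pairW (empW M) T σ j * χ (pairStep empStep σ j).1.2 +
        ∑ j, pairW (empW M) T σ j * χ (pairStep empStep σ j).2.2 =
        ∑ j, M (emp T σ.1) σ.1.2 j * χ j + ∑ j, M (emp T σ.2) σ.2.2 j * χ j := by
      rw [← hχ, ← Finset.sum_add_distrib]
      refine Finset.sum_congr rfl fun j _ => ?_
      simp only [pairW, empW, pairStep, empStep]
      ring
    rw [hχ']
    have : 0 ≤ c / 2 * ‖corrDiff Q T σ‖ ^ 2 / T := by positivity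
    linarith
  · intro T hT σ hσ j
    obtain ⟨a1, a2, a3, a4⟩ := hTT T hT
    obtain ⟨hyT, ζ, ρ, -, hζn, hρn, hy⟩ := hstep T a1 σ hσ
    have hTpos : (0 : ℝ) < T := by exact_mod_cast (hT1.trans a1)
    have hT1r : (1 : ℝ) ≤ T := by exact_mod_cast (hT1.trans a1)
    set y := corrDiff Q T σ with hydef
    have hy' : corrDiff Q (T + 1) (pairStep empStep σ j) = y + (T : ℝ)⁻¹ • (y + D y) + ζ j + ρ j :=
      hy j
    set y' := corrDiff Q (T + 1) (pairStep empStep σ j) with hy'def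
    have hyK : ‖y‖ / T ≤ K' := by rw [div_le_iff₀ hTpos]; exact hyT
    have hd : ‖y' - y‖ ≤ C2 := by
      have e1 : y' - y = (T : ℝ)⁻¹ • (y + D y) + ζ j + ρ j := by rw [hy']; abel
      rw [e1]
      have e2 : ‖(T : ℝ)⁻¹ • (y + D y)‖ ≤ (1 + K') * K' := by
        rw [norm_smul, Real.norm_of_nonneg (by positivity), inv_mul_eq_div]
        calc _ ≤ (‖y‖ + K' * ‖y‖) / T := by
              gcongr
              exact (norm_add_le _ _).trans (add_le_add le_rfl ((h.D_le y).trans (by gcongr)))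
          _ = (1 + K') * (‖y‖ / T) := by ring
          _ ≤ _ := by gcongr
      have e3 : ‖ρ j‖ ≤ K' + K' := by
        refine (hρn j).trans ?_
        have : (η * ‖y‖ + K') / T = η * (‖y‖ / T) + K' / T := by ring
        change (η * ‖y‖ + K') / T ≤ _
        rw [this]
        refine add_le_add ?_ (div_le_self (by linarith) hT1r)
        exact (mul_le_of_le_one_left (by positivity) h.hη1).trans hyK
      calc _ ≤ ‖(T : ℝ)⁻¹ • (y + D y)‖ + ‖ζ j‖ + ‖ρ j‖ := norm_add₃_le
        _ ≤ _ := by rw [hC2]; linarith [hζn j]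
    have hexp : B y' y' - B y y = B (y' - y) (y' - y) + 2 * B (y' - y) y := by
      simp only [map_sub, LinearMap.sub_apply]
      rw [h.B_symm y y']; ring
    have hn0 := norm_nonneg y
    calc |B y' y' - B y y| ≤ |B (y' - y) (y' - y)| + |2 * B (y' - y) y| := by
          rw [hexp]; exact abs_add_le _ _
      _ ≤ KB * C2 * C2 + 2 * (KB * C2 * ‖y‖) := by
          rw [abs_mul, abs_two]
          have := h.B_le (y' - y) (y' - y)
          have := h.B_le (y' - y) y
          have : KB * ‖y' - y‖ * ‖y' - y‖ ≤ KB * C2 * C2 := by gcongr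
          have : KB * ‖y' - y‖ * ‖y‖ ≤ KB * C2 * ‖y‖ := by gcongr
          linarith
      _ ≤ KB * C2 * (C2 + 2) * (‖y‖ + 1) := by
          have : 0 ≤ KB * C2 * C2 * ‖y‖ := by positivity
          have : 0 ≤ KB * C2 := by positivity
          linarith
      _ ≤ _ := by
          gcongr
          have := h.hK
          have : 0 ≤ C' + 2 * (KB * (2 * K) * (2 * K)) := by positivity
          linarith
  · intro T hT σ hσ
    have hm := h.B_le (corrDiff Q T σ) (corrDiff Q T σ)
    have : 0 ≤ KB * C2 * (C2 + 2) + (C' + 2 * (KB * (2 * K) * (2 * K))) := by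
      have := h.hK
      positivity
    calc _ ≤ KB * ‖corrDiff Q T σ‖ ^ 2 := by rw [pow_two, ← mul_assoc]; exact hm
      _ ≤ _ := by gcongr; linarith
  · intro T _ σ _
    exact norm_nonneg _
  · intro T hT σ hσ
    refine (hstep T (hTT T hT).1 σ hσ).1.trans ?_
    have : 0 ≤ KB * C2 * (C2 + 2) + (C' + 2 * (KB * (2 * K) * (2 * K))) := by
      have := h.hK
      positivity
    gcongr
    linarith
  · intro σ
    exact add_nonneg (h.χ_nonneg _) (h.χ_nonneg _)
  · intro σ
    have : 0 ≤ KB * C2 * (C2 + 2) + (C' + 2 * (KB * (2 * K) * (2 * K))) := by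
      have := h.hK
      positivity
    linarith [hXi σ.1.2, hXi σ.2.2]

/-- From any late time, the probability of remaining near `vstar` for `k` steps tends to `0` as
`k → ∞`, uniformly in the state. -/
theorem LocalModel.surv_small (h : LocalModel vstar r M π Q D B χ s c KB K η c0) :
    ∃ T1 : ℕ, ∀ m ≥ T1, ∀ ε > 0, ∃ k, ∀ σ, surv (empW M) empStep (empBall vstar r) k m σ ≤ ε := by
  obtain ⟨C, T0, hE⟩ := h.isExpanding
  obtain ⟨ρ, hρ, T1, hdiag⟩ := hE.surv_diag
  have hr := h.hr
  have hw : ∀ T ≥ T0, ∀ σ, empBall vstar r T σ →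
      (∀ j, 0 ≤ empW M T σ j) ∧ ∑ j, empW M T σ j = 1 := by
    intro T _ σ hσ
    have hmem : emp T σ ∈ Metric.ball vstar r := by
      rw [Metric.mem_ball]; unfold empBall at hσ; linarith
    exact ⟨h.M_nonneg _ hmem (emp_nonneg T σ) _, h.M_sum _ hmem _⟩
  -- two independent copies started from the same state: survival probability squared
  have hsq : ∀ m ≥ max T0 T1, ∃ k, ∀ σ,
      surv (empW M) empStep (empBall vstar r) k m σ ≤ Real.sqrt ρ := by
    intro m hm
    obtain ⟨k, hk⟩ := hdiag m (le_of_max_le_right hm)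
    refine ⟨k, fun σ => Real.le_sqrt_of_sq_le ?_⟩
    have := hk (σ, σ) (by simp [corrDiff])
    rw [surv_pair] at this
    rw [pow_two]; exact this
  have hρ1 : Real.sqrt ρ < 1 := by rw [Real.sqrt_lt' one_pos]; simpa using hρ
  have hρ0 : 0 ≤ Real.sqrt ρ := Real.sqrt_nonneg ρ
  have hpow : ∀ n : ℕ, ∀ m ≥ max T0 T1, ∃ k, ∀ σ,
      surv (empW M) empStep (empBall vstar r) k m σ ≤ Real.sqrt ρ ^ n := by
    intro n
    induction n with
    | zero =>
      intro m hm
      exact ⟨0, fun σ => by simpa using (surv_mem_Icc hw 0 m (le_of_max_le_left hm) σ).2⟩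
    | succ n ih =>
      intro m hm
      obtain ⟨k, hk⟩ := hsq m hm
      obtain ⟨k', hk'⟩ := ih (m + k) (by omega)
      refine ⟨k + k', fun σ => (surv_add hw k m (le_of_max_le_left hm) hk' σ).trans ?_⟩
      rw [pow_succ]
      exact mul_le_mul_of_nonneg_left (hk σ) (by positivity)
  refine ⟨max T0 T1, fun m hm ε hε => ?_⟩
  obtain ⟨n, hn⟩ := exists_pow_lt_of_lt_one hε hρ1
  obtain ⟨k, hk⟩ := hpow n m hm
  exact ⟨k, fun σ => (hk σ).trans hn.le⟩

end LocalModel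

/-! ### Transfer to the process -/

section Transfer

set_option linter.unusedSectionVars false

/-- Transition matrix of the chain frozen at the empirical measure `v`. -/
noncomputable def kern {N : ℕ} (A : Matrix (Fin N) (Fin N) ℝ) (α : ℝ) (v : Fin N → ℝ)
    (x j : Fin N) : ℝ :=
  A x j * v j ^ α / ∑ k, A x k * v k ^ α

/-- The state of the process at time `n`: the counts `1 + Z_n` and the position `X_n`. The counts add
up to `n + 1 + N`, which is the time index used for the chain. -/
def histState {N : ℕ} {Ω : Type*} (X : ℕ → Ω → Fin N) (Z : ℕ → Fin N → Ω → ℕ) (n : ℕ) (ω : Ω) :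
    (Fin N → ℕ) × Fin N := (fun i => 1 + Z n i ω, X n ω)

/-- The `σ`-algebra generated by `X_0, …, X_n`. -/
abbrev histSigma {N : ℕ} {Ω : Type*} (X : ℕ → Ω → Fin N) (n : ℕ) : MeasurableSpace Ω :=
  ⨆ k ∈ Finset.range (n + 1), MeasurableSpace.comap (X k) ⊤

variable {N : ℕ} {α : ℝ} {A : Matrix (Fin N) (Fin N) ℝ}

/-- By homogeneity, `kern` at the empirical measure is the reinforced transition probability. -/
theorem kern_emp (T : ℕ) (hT : 1 ≤ T) (σ : (Fin N → ℕ) × Fin N) (x j : Fin N) :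
    kern A α (emp T σ) x j =
      A x j * (σ.1 j : ℝ) ^ α / ∑ k, A x k * (σ.1 k : ℝ) ^ α := by
  have hT0 : (0 : ℝ) < T := by positivity
  have h1 : ∀ k, emp T σ k ^ α = (σ.1 k : ℝ) ^ α * ((T : ℝ) ^ α)⁻¹ := fun k => by
    rw [emp, Real.div_rpow (by positivity) hT0.le, div_eq_mul_inv]
  have h2 : ((T : ℝ) ^ α)⁻¹ ≠ 0 := by positivity
  simp only [kern, h1, ← mul_assoc]
  rw [← Finset.sum_mul, mul_div_mul_right _ _ h2]

theorem kern_nonneg (hnonneg : ∀ i j, 0 ≤ A i j) {v : Fin N → ℝ} (hv : ∀ i, 0 ≤ v i) (x j : Fin N) :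
    0 ≤ kern A α v x j :=
  div_nonneg (mul_nonneg (hnonneg _ _) (Real.rpow_nonneg (hv _) _))
    (Finset.sum_nonneg fun _ _ => mul_nonneg (hnonneg _ _) (Real.rpow_nonneg (hv _) _))

theorem kern_sum_le (v : Fin N → ℝ) (x : Fin N) :
    ∑ j, kern A α v x j ≤ 1 := by
  simp only [kern]
  rw [← Finset.sum_div]
  exact div_self_le_one _

variable {Ω : Type*} [mΩ : MeasurableSpace Ω] {μ : Measure Ω} [IsProbabilityMeasure μ]
    {X : ℕ → Ω → Fin N} {Z : ℕ → Fin N → Ω → ℕ}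

theorem histSigma_le (hX : ∀ n, Measurable (X n)) (n : ℕ) : histSigma X n ≤ mΩ :=
  iSup₂_le fun k _ => (hX k).comap_le

theorem histSigma_mono (n : ℕ) : histSigma X n ≤ histSigma X (n + 1) := by
  refine iSup₂_le fun k hk => ?_
  refine le_iSup₂_of_le k ?_ le_rfl
  rw [Finset.mem_range] at *
  omega

theorem measurable_histState_aux {n : ℕ} (hXm : ∀ k ∈ Finset.range (n + 1), Measurable (X k))
    (hZ : ∀ n j ω, Z n j ω = ((Finset.range (n + 1)).filter fun ℓ => X ℓ ω = j).card) :
    Measurable (histState X Z n) := by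
  refine Measurable.prodMk (measurable_pi_lambda _ fun i => ?_) (hXm n (by simp))
  have h1 : (fun ω => 1 + Z n i ω) =
      fun ω => 1 + ∑ ℓ ∈ Finset.range (n + 1), if X ℓ ω = i then 1 else 0 := by
    ext ω
    rw [hZ, Finset.card_filter]
  rw [h1]
  refine Measurable.const_add (Finset.measurable_fun_sum _ fun ℓ hℓ => ?_) 1
  exact Measurable.ite (hXm ℓ hℓ (measurableSet_singleton i)) measurable_const measurable_const

theorem measurable_histState
    (hZ : ∀ n j ω, Z n j ω = ((Finset.range (n + 1)).filter fun ℓ => X ℓ ω = j).card) (n : ℕ) :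
    Measurable[histSigma X n] (histState X Z n) :=
  @measurable_histState_aux N Ω (histSigma X n) X Z n (fun k hk =>
    measurable_iff_comap_le.2 (le_iSup₂_of_le k hk le_rfl)) hZ

theorem histState_succ
    (hZ : ∀ n j ω, Z n j ω = ((Finset.range (n + 1)).filter fun ℓ => X ℓ ω = j).card) (n : ℕ)
    (ω : Ω) : histState X Z (n + 1) ω = empStep (histState X Z n ω) (X (n + 1) ω) := by
  refine Prod.ext ?_ rfl
  ext i
  simp only [histState, empStep, Pi.add_apply, hZ]
  rw [Finset.range_add_one (n := n + 1), Finset.filter_insert]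
  by_cases h : X (n + 1) ω = i
  · subst h
    simp [add_assoc]
  · rw [if_neg h, Pi.single_eq_of_ne (Ne.symm h)]
    rfl

/-- On an event `E` of the past, the probability that the process satisfies `ball` at the times
`n, …, n + k` is the integral over `E` of `surv`. -/
theorem measure_stay (hnonneg : ∀ i j, 0 ≤ A i j) (hX : ∀ n, Measurable (X n))
    (hZ : ∀ n j ω, Z n j ω = ((Finset.range (n + 1)).filter fun ℓ => X ℓ ω = j).card)
    (hcond : ∀ (n : ℕ) (j : Fin N),
      μ[(fun ω => if X (n + 1) ω = j then (1 : ℝ) else 0) | histSigma X n] =ᵐ[μ]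
        fun ω => A (X n ω) j * (1 + (Z n j ω : ℝ)) ^ α /
          ∑ k : Fin N, A (X n ω) k * (1 + (Z n k ω : ℝ)) ^ α)
    (ball : ℕ → (Fin N → ℕ) × Fin N → Prop) (k : ℕ) : ∀ n (E : Set Ω), MeasurableSet[histSigma X n] E →
      μ.real (E ∩ {ω | ∀ l ≤ k, ball (n + l + 1 + N) (histState X Z (n + l) ω)}) =
        ∫ ω in E, surv (empW (kern A α)) empStep ball k (n + 1 + N) (histState X Z n ω) ∂μ := by
  have hle := histSigma_le hX
  have hst := measurable_histState hZ
  have hbd : ∀ k T σ, 0 ≤ surv (empW (kern A α)) empStep ball k T σ ∧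
      surv (empW (kern A α)) empStep ball k T σ ≤ 1 := fun k T =>
    surv_mem_Icc_of_le (T0 := 0) (fun T _ σ _ => ⟨kern_nonneg hnonneg (emp_nonneg T σ) _,
      kern_sum_le _ _⟩) k T (Nat.zero_le _)
  have hball : ∀ n, MeasurableSet[histSigma X n] {ω | ball (n + 1 + N) (histState X Z n ω)} :=
    fun n => hst n (MeasurableSet.of_discrete (s := {σ | ball (n + 1 + N) σ}))
  induction k with
  | zero =>
    intro n E hE
    have h1 : (fun ω => surv (empW (kern A α)) empStep ball 0 (n + 1 + N) (histState X Z n ω)) =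
        indicator {ω | ball (n + 1 + N) (histState X Z n ω)} 1 := by
      ext ω
      by_cases h : ball (n + 1 + N) (histState X Z n ω)
      · rw [surv_zero_of_ball h, indicator_of_mem (by exact h)]; rfl
      · rw [surv_of_not_ball h, indicator_of_notMem (by exact h)]
    rw [h1, integral_indicator_one (hle n _ (hball n)), measureReal_restrict_apply (hle n _ (hball n)),
      inter_comm]
    congr 2
    ext ω
    simp
  | succ k ih =>
    intro n E hE
    set G : Set Ω := {ω | ball (n + 1 + N) (histState X Z n ω)} with hG
    have hEG : MeasurableSet[histSigma X n] (E ∩ G) := MeasurableSet.inter hE (hball n)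
    have hset : E ∩ {ω | ∀ l ≤ k + 1, ball (n + l + 1 + N) (histState X Z (n + l) ω)} =
        (E ∩ G) ∩ {ω | ∀ l ≤ k, ball ((n + 1) + l + 1 + N) (histState X Z ((n + 1) + l) ω)} := by
      ext ω
      simp only [mem_inter_iff, mem_ofPred_eq, hG, and_assoc]
      refine and_congr_right fun _ => ⟨fun h => ⟨h 0 (by omega), fun l hl => ?_⟩, ?_⟩
      · have := h (l + 1) (by omega)
        rwa [← add_assoc, add_right_comm n l 1] at this
      · rintro ⟨h0, h1⟩ l hl
        rcases l with _ | l
        · exact h0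
        · have := h1 l (by omega)
          rwa [add_right_comm n 1 l] at this
    rw [hset, ih (n + 1) (E ∩ G) (histSigma_mono n _ hEG)]
    set g : Fin N → Ω → ℝ := fun j ω =>
      surv (empW (kern A α)) empStep ball k (n + 1 + 1 + N) (empStep (histState X Z n ω) j) with hg
    set f : Fin N → Ω → ℝ := fun j ω => if X (n + 1) ω = j then (1 : ℝ) else 0 with hf
    have hgm : ∀ j, StronglyMeasurable[histSigma X n] (g j) := fun j =>
      Measurable.stronglyMeasurable ((Measurable.of_discrete
        (f := fun σ => surv (empW (kern A α)) empStep ball k (n + 1 + 1 + N) (empStep σ j))).comp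
          (hst n))
    have hfm : ∀ j, Measurable (f j) := fun j =>
      Measurable.ite (hX (n + 1) (measurableSet_singleton j)) measurable_const measurable_const
    have hfi : ∀ j, Integrable (f j) μ := fun j =>
      Integrable.of_bound (hfm j).aestronglyMeasurable 1 (Eventually.of_forall fun ω => by
        simp only [hf]; split_ifs <;> simp)
    have hgfi : ∀ j, Integrable (g j * f j) μ := fun j =>
      Integrable.of_bound (((hgm j).mono (hle n)).aestronglyMeasurable.mul
        (hfm j).aestronglyMeasurable) 1 (Eventually.of_forall fun ω => by
        obtain ⟨h0, h1⟩ := hbd k (n + 1 + 1 + N) (empStep (histState X Z n ω) j)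
        simp only [hf, hg, Pi.mul_apply, Real.norm_eq_abs]
        split_ifs
        · rw [mul_one, abs_of_nonneg h0]; exact h1
        · simp)
    have hpull : ∀ j, ∫ ω in E ∩ G, g j ω * f j ω ∂μ =
        ∫ ω in E ∩ G, g j ω * kern A α (emp (n + 1 + N) (histState X Z n ω)) (X n ω) j ∂μ := by
      intro j
      have h1 := condExp_mul_of_stronglyMeasurable_left (hgm j) (hgfi j) (hfi j)
      have h2 := setIntegral_condExp (hle n) (hgfi j) hEG
      change ∫ ω in E ∩ G, (g j * f j) ω ∂μ = _
      rw [← h2]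
      refine setIntegral_congr_ae (hle n _ hEG) ?_
      filter_upwards [h1, hcond n j] with ω e1 e2 _
      rw [e1, Pi.mul_apply, e2, kern_emp _ (by omega)]
      simp [histState]
    have hgki : ∀ j, Integrable (fun ω => g j ω *
        kern A α (emp (n + 1 + N) (histState X Z n ω)) (X n ω) j) μ := by
      intro j
      have h1 := condExp_mul_of_stronglyMeasurable_left (hgm j) (hgfi j) (hfi j)
      refine (integrable_condExp (m := histSigma X n) (f := g j * f j)).congr ?_
      filter_upwards [h1, hcond n j] with ω e1 e2
      rw [e1, Pi.mul_apply, e2, kern_emp _ (by omega)]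
      simp [histState]
    have hL : ∀ ω, surv (empW (kern A α)) empStep ball k (n + 1 + 1 + N) (histState X Z (n + 1) ω) =
        ∑ j, g j ω * f j ω := by
      intro ω
      rw [histState_succ hZ]
      simp [hf, hg]
    have hR : ∀ ω, surv (empW (kern A α)) empStep ball (k + 1) (n + 1 + N) (histState X Z n ω) =
        indicator G (fun ω => ∑ j, g j ω *
          kern A α (emp (n + 1 + N) (histState X Z n ω)) (X n ω) j) ω := by
      intro ω
      by_cases h : ball (n + 1 + N) (histState X Z n ω)
      · rw [indicator_of_mem (by exact h), surv_succ_of_ball h]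
        refine Finset.sum_congr rfl fun j _ => ?_
        rw [mul_comm, add_right_comm (n + 1) N 1]
        rfl
      · rw [surv_of_not_ball h, indicator_of_notMem (by exact h)]
    simp only [hL, hR]
    rw [setIntegral_indicator (hle n _ (hball n)), integral_finsetSum _ fun j _ =>
      (hgki j).integrableOn]
    refine (integral_finsetSum (f := fun j ω => g j ω * f j ω) _ fun j _ =>
      (hgfi j).integrableOn).trans ?_
    exact Finset.sum_congr rfl fun j _ => hpull j

/-- The initial count `1` at each site does not change the limit of the empirical measures. -/
theorem tendsto_emp {vstar : Fin N → ℝ} {ω : Ω}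
    (h : Tendsto (fun n : ℕ => fun i => (Z n i ω : ℝ) / ((n : ℝ) + 1)) atTop (nhds vstar)) :
    Tendsto (fun n : ℕ => emp (n + 1 + N) (histState X Z n ω)) atTop (nhds vstar) := by
  rw [tendsto_pi_nhds] at h ⊢
  intro i
  have h1 : Tendsto (fun n : ℕ => (1 : ℝ) / ((n : ℝ) + 1)) atTop (nhds 0) :=
    tendsto_one_div_add_atTop_nhds_zero_nat
  have h2 : Tendsto (fun n : ℕ => (1 + (N : ℝ) * (1 / ((n : ℝ) + 1)))) atTop (nhds (1 + N * 0)) :=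
    (h1.const_mul _).const_add _
  have h3 := ((h i).add h1).div h2 (by simp)
  simp only [mul_zero, add_zero, div_one] at h3
  refine h3.congr fun n => ?_
  have : (0 : ℝ) < n + 1 := by positivity
  have : (0 : ℝ) < n + 1 + N := by positivity
  simp only [emp, histState, Pi.div_apply]
  push_cast
  field_simp
  ring

/-- If survival in a ball around `vstar` is uniformly unlikely, the empirical measures do not converge
to `vstar`: otherwise they would stay in the ball from some time on. -/
theorem measure_tendsto_eq_zero (hnonneg : ∀ i j, 0 ≤ A i j) (hX : ∀ n, Measurable (X n))
    (hZ : ∀ n j ω, Z n j ω = ((Finset.range (n + 1)).filter fun ℓ => X ℓ ω = j).card)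
    (hcond : ∀ (n : ℕ) (j : Fin N),
      μ[(fun ω => if X (n + 1) ω = j then (1 : ℝ) else 0) | histSigma X n] =ᵐ[μ]
        fun ω => A (X n ω) j * (1 + (Z n j ω : ℝ)) ^ α /
          ∑ k : Fin N, A (X n ω) k * (1 + (Z n k ω : ℝ)) ^ α)
    {vstar : Fin N → ℝ} {r : ℝ} (hr : 0 < r) {T1 : ℕ}
    (hsurv : ∀ m ≥ T1, ∀ ε > 0, ∃ k, ∀ σ,
      surv (empW (kern A α)) empStep (empBall vstar r) k m σ ≤ ε) :
    μ {ω | Tendsto (fun n : ℕ => fun i => (Z n i ω : ℝ) / ((n : ℝ) + 1)) atTop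
        (nhds vstar)} = 0 := by
  have hnull : ∀ n ≥ T1, μ {ω | ∀ l, empBall vstar r (n + l + 1 + N) (histState X Z (n + l) ω)} = 0 := by
    intro n hn
    rw [← measureReal_eq_zero_iff]
    refine le_antisymm (le_of_forall_pos_le_add fun ε hε => ?_) measureReal_nonneg
    obtain ⟨k, hk⟩ := hsurv (n + 1 + N) (by omega) ε hε
    have h1 := measure_stay hnonneg hX hZ hcond (empBall vstar r) k n univ MeasurableSet.univ
    rw [univ_inter, setIntegral_univ] at h1
    calc _ ≤ μ.real {ω | ∀ l ≤ k, empBall vstar r (n + l + 1 + N) (histState X Z (n + l) ω)} :=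
          measureReal_mono (fun ω (hω : ∀ l, _) l _ => hω l)
      _ = _ := h1
      _ ≤ ∫ _, ε ∂μ := by
          refine integral_mono_of_nonneg (Eventually.of_forall fun ω => ?_) (integrable_const _)
            (Eventually.of_forall fun ω => hk _)
          exact (surv_mem_Icc_of_le (T0 := 0) (fun T _ σ _ => ⟨kern_nonneg hnonneg
            (emp_nonneg T σ) _, kern_sum_le _ _⟩) k _ (Nat.zero_le _) _).1
      _ = 0 + ε := by simp
  refine measure_mono_null (t := ⋃ n : ℕ, {ω | ∀ l, empBall vstar r (n + T1 + l + 1 + N)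
    (histState X Z (n + T1 + l) ω)}) ?_ (measure_iUnion_null fun n => hnull (n + T1) (by omega))
  intro ω hω
  have h1 := tendsto_emp (X := X) hω
  obtain ⟨n, hn⟩ := eventually_atTop.1 (h1.eventually (Metric.ball_mem_nhds vstar (half_pos hr)))
  rw [mem_iUnion]
  exact ⟨n, fun l => hn (n + T1 + l) (by omega)⟩

end Transfer

/-! ### The frozen chain and its Poisson equation -/

section Equilibrium

variable {N : ℕ} {α : ℝ} {A : Matrix (Fin N) (Fin N) ℝ} {v : Fin N → ℝ}

/-- The vector `A v^α`. -/
noncomputable def field (A : Matrix (Fin N) (Fin N) ℝ) (α : ℝ) (v : Fin N → ℝ) (x : Fin N) : ℝ :=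
  ∑ k, A x k * v k ^ α

theorem Hfun_eq : Hfun A α v = ∑ i, v i ^ α * field A α v i := by
  simp only [Hfun, field, Finset.mul_sum]
  refine Finset.sum_congr rfl fun i _ => Finset.sum_congr rfl fun j _ => by ring

theorem piFun_eq (i : Fin N) : piFun A α v i = v i ^ α * field A α v i / Hfun A α v := rfl

theorem kern_eq (x j : Fin N) : kern A α v x j = A x j * v j ^ α / field A α v x := rfl

theorem sum_piFun (hH : Hfun A α v ≠ 0) : ∑ i, piFun A α v i = 1 := by
  simp only [piFun_eq]
  rw [← Finset.sum_div, ← Hfun_eq, div_self hH]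

theorem sum_kern {x : Fin N} (hx : field A α v x ≠ 0) : ∑ j, kern A α v x j = 1 := by
  simp only [kern_eq]
  rw [← Finset.sum_div]
  exact div_self hx

/-- `π(v)` is the stationary measure of the frozen chain. -/
theorem piFun_kern (hsymm : ∀ i j, A i j = A j i) (hf : ∀ x, field A α v x ≠ 0) (j : Fin N) :
    ∑ x, piFun A α v x * kern A α v x j = piFun A α v j := by
  simp only [piFun_eq, kern_eq]
  calc _ = ∑ x, v j ^ α * (A j x * v x ^ α) / Hfun A α v := by
        refine Finset.sum_congr rfl fun x _ => ?_
        have := hf x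
        rw [hsymm j x]
        field_simp
    _ = _ := by rw [← Finset.sum_div, ← Finset.mul_sum]; rfl

/-- The matrix `I - P + 1 ⊗ π` of the frozen chain, whose inverse is the fundamental matrix. -/
noncomputable def fundMat (A : Matrix (Fin N) (Fin N) ℝ) (α : ℝ) (v : Fin N → ℝ) :
    Matrix (Fin N) (Fin N) ℝ :=
  fun x j => (1 : Matrix (Fin N) (Fin N) ℝ) x j - kern A α v x j + piFun A α v j

/-- Rows of the fundamental matrix. They solve the Poisson equation, see `poissonSol_eq`. -/
noncomputable def poissonSol (A : Matrix (Fin N) (Fin N) ℝ) (α : ℝ) (v : Fin N → ℝ) :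
    Fin N → Fin N → ℝ := fun x i => (fundMat A α v)⁻¹ x i

theorem piFun_fundMat (hsymm : ∀ i j, A i j = A j i) (hH : Hfun A α v ≠ 0)
    (hf : ∀ x, field A α v x ≠ 0) : piFun A α v ᵥ* fundMat A α v = piFun A α v := by
  ext j
  simp only [vecMul, dotProduct, fundMat, mul_add, mul_sub, Finset.sum_add_distrib,
    Finset.sum_sub_distrib]
  rw [piFun_kern hsymm hf, ← Finset.sum_mul, sum_piFun hH]
  simp [Matrix.one_apply]

/-- The Poisson equation `Q - P Q = δ - π`. -/
theorem poissonSol_eq (hsymm : ∀ i j, A i j = A j i) (hH : Hfun A α v ≠ 0)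
    (hf : ∀ x, field A α v x ≠ 0) (hdet : (fundMat A α v).det ≠ 0) (x : Fin N) :
    poissonSol A α v x - ∑ j, kern A α v x j • poissonSol A α v j =
      Pi.single x 1 - piFun A α v := by
  have hu : IsUnit (fundMat A α v).det := isUnit_iff_ne_zero.2 hdet
  have h1 : fundMat A α v * (fundMat A α v)⁻¹ = 1 := Matrix.mul_nonsing_inv _ hu
  have h2 : piFun A α v ᵥ* (fundMat A α v)⁻¹ = piFun A α v := by
    conv_lhs => rw [← piFun_fundMat hsymm hH hf]
    rw [vecMul_vecMul, h1, vecMul_one]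
  ext i
  have h3 := congrFun (congrFun h1 x) i
  have h4 := congrFun h2 i
  simp only [Matrix.mul_apply, fundMat, add_mul, sub_mul, Finset.sum_add_distrib,
    Finset.sum_sub_distrib, vecMul, dotProduct] at h3 h4
  simp only [Pi.sub_apply, Finset.sum_apply, Pi.smul_apply, smul_eq_mul]
  change (fundMat A α v)⁻¹ x i - ∑ j, kern A α v x j * (fundMat A α v)⁻¹ j i = _
  have h5 : ∑ j, (1 : Matrix (Fin N) (Fin N) ℝ) x j * (fundMat A α v)⁻¹ j i =
      (fundMat A α v)⁻¹ x i := by simp [Matrix.one_apply]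
  have h6 : (1 : Matrix (Fin N) (Fin N) ℝ) x i = (Pi.single x (1 : ℝ) : Fin N → ℝ) i := by
    rw [Matrix.one_apply, Pi.single_apply]
    simp only [eq_comm]
  rw [← h6]
  rw [h5, h4] at h3
  linarith

/-- An equilibrium `v`, with `F(v) = 0` written as `eq_mul`, together with the properties of `A` and the
positivity of `A v^α` and `H(v)`. -/
structure EqPoint (A : Matrix (Fin N) (Fin N) ℝ) (α : ℝ) (v : Fin N → ℝ) : Prop where
  hα : 1 < α
  symm : ∀ i j, A i j = A j i
  A_nonneg : ∀ i j, 0 ≤ A i j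
  A_pos : ∀ i j, i ≠ j → 0 < A i j
  v_nonneg : ∀ i, 0 ≤ v i
  v_sum : ∑ i, v i = 1
  field_pos : ∀ x, 0 < field A α v x
  H_pos : 0 < Hfun A α v
  eq_mul : ∀ i, v i ^ α * field A α v i = Hfun A α v * v i

/-- An equilibrium in `Δ` is not a vertex without loop, so `A v^α` and `H(v)` are positive. -/
theorem EqPoint.mk' (hα : 1 < α) (hsymm : ∀ i j, A i j = A j i)
    (hnonneg : ∀ i j, 0 ≤ A i j) (hoffdiag : ∀ i j, i ≠ j → 0 < A i j)
    (hv : v ∈ simplexD A) (heq : Ffield A α v = 0) : EqPoint A α v := by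
  obtain ⟨hv0, hv1, hv2⟩ := hv
  have hterm : ∀ x k, 0 ≤ A x k * v k ^ α := fun x k =>
    mul_nonneg (hnonneg _ _) (Real.rpow_nonneg (hv0 k) _)
  have hfield : ∀ x, 0 < field A α v x := by
    intro x
    obtain ⟨k, hAk, hk⟩ : ∃ k, 0 < A x k ∧ 0 < v k := by
      by_contra! hcon
      have hz : ∀ k, k ≠ x → v k = 0 := fun k hk =>
        le_antisymm (hcon k (hoffdiag x k hk.symm)) (hv0 k)
      have hx1 : v x = 1 := by
        rw [← hv1, Finset.sum_eq_single x (fun k _ hk => hz k hk) (by simp)]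
      have hA : A x x = 0 := by
        by_contra hA
        have := hcon x (lt_of_le_of_ne (hnonneg x x) (Ne.symm hA))
        linarith
      have := hv2 x hA
      linarith
    exact Finset.sum_pos' (fun k _ => hterm x k)
      ⟨k, Finset.mem_univ k, mul_pos hAk (Real.rpow_pos_of_pos hk _)⟩
  have hH : 0 < Hfun A α v := by
    rw [Hfun_eq]
    obtain ⟨k, hk⟩ : ∃ k, 0 < v k := by
      by_contra! hcon
      have : ∑ i, v i ≤ 0 := Finset.sum_nonpos fun i _ => hcon i
      linarith
    exact Finset.sum_pos' (fun k _ => mul_nonneg (Real.rpow_nonneg (hv0 k) _) (hfield k).le)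
      ⟨k, Finset.mem_univ k, mul_pos (Real.rpow_pos_of_pos hk _) (hfield k)⟩
  refine ⟨hα, hsymm, hnonneg, hoffdiag, hv0, hv1, hfield, hH, fun i => ?_⟩
  have := congrFun heq i
  simp only [Ffield, piFun_eq, Pi.zero_apply, sub_eq_zero] at this
  rw [div_eq_iff hH.ne'] at this
  rw [this, mul_comm]

theorem EqPoint.piFun_eq_self (h : EqPoint A α v) : piFun A α v = v := by
  ext i
  rw [piFun_eq, h.eq_mul, mul_comm, mul_div_assoc, div_self h.H_pos.ne', mul_one]

theorem EqPoint.kern_pos (h : EqPoint A α v) {x j : Fin N} (hA : 0 < A x j) (hj : 0 < v j) : 0 < kern A α v x j :=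
  div_pos (mul_pos hA (Real.rpow_pos_of_pos hj _)) (h.field_pos x)

theorem EqPoint.kern_zero (h : EqPoint A α v) {x j : Fin N} (hj : v j = 0) : kern A α v x j = 0 := by
  rw [kern_eq, hj, Real.zero_rpow (by linarith [h.hα])]; simp

theorem EqPoint.exists_pos (h : EqPoint A α v) : ∃ k, 0 < v k := by
  by_contra! hcon
  have : ∑ i, v i ≤ 0 := Finset.sum_nonpos fun i _ => hcon i
  linarith [h.v_sum]

/-- The frozen chain at `v` is irreducible on the support of `v`, so `I - P + 1 ⊗ π` is invertible. -/
theorem EqPoint.det_ne_zero (h : EqPoint A α v) : (fundMat A α v).det ≠ 0 := by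
  intro hdet
  obtain ⟨g, hg0, hg⟩ := Matrix.exists_mulVec_eq_zero_iff.2 hdet
  have hf : ∀ x, field A α v x ≠ 0 := fun x => (h.field_pos x).ne'
  have hπg : v ⬝ᵥ g = 0 := by
    rw [← h.piFun_eq_self, ← piFun_fundMat h.symm h.H_pos.ne' hf, ← Matrix.dotProduct_mulVec, hg,
      dotProduct_zero]
  have hPg : ∀ x, g x = ∑ j, kern A α v x j * g j := by
    intro x
    have := congrFun hg x
    simp only [mulVec, dotProduct, fundMat, add_mul, sub_mul, Finset.sum_add_distrib,
      Finset.sum_sub_distrib, Pi.zero_apply, h.piFun_eq_self] at this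
    have h1 : ∑ j, v j * g j = 0 := hπg
    have h2 : ∑ j, (1 : Matrix (Fin N) (Fin N) ℝ) x j * g j = g x := by simp [Matrix.one_apply]
    rw [h1, h2] at this
    linarith
  have hk0 : ∀ x j, 0 ≤ kern A α v x j := kern_nonneg h.A_nonneg h.v_nonneg
  -- maximum principle: a function harmonic for `P` is constant on the support
  obtain ⟨k, hk⟩ := h.exists_pos
  obtain ⟨i, hi, hmax⟩ := Finset.exists_max_image (Finset.univ.filter fun i => 0 < v i) g
    ⟨k, by simpa using hk⟩
  simp only [Finset.mem_filter, Finset.mem_univ, true_and] at hi hmax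
  have hle : ∀ j, kern A α v i j * g j ≤ kern A α v i j * g i := by
    intro j
    rcases (h.v_nonneg j).eq_or_lt with hj | hj
    · rw [h.kern_zero hj.symm]; simp
    · exact mul_le_mul_of_nonneg_left (hmax j hj) (hk0 i j)
  have hsum : ∑ j, kern A α v i j * g j = ∑ j, kern A α v i j * g i := by
    rw [← hPg, ← Finset.sum_mul, sum_kern (hf i), one_mul]
  have hall := (Finset.sum_eq_sum_iff_of_le (fun j _ => hle j)).1 hsum
  have hconst : ∀ j, 0 < v j → g j = g i := by
    intro j hj
    by_cases hij : i = j
    · rw [hij]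
    · exact mul_left_cancel₀ (h.kern_pos (h.A_pos i j hij) hj).ne' (hall j (Finset.mem_univ j))
  have hgi : g i = 0 := by
    have : ∑ j, v j * g j = g i := by
      calc _ = ∑ j, v j * g i := by
            refine Finset.sum_congr rfl fun j _ => ?_
            rcases (h.v_nonneg j).eq_or_lt with hj | hj
            · rw [← hj]; simp
            · rw [hconst j hj]
        _ = _ := by rw [← Finset.sum_mul, h.v_sum, one_mul]
    rw [← this]; exact hπg
  refine hg0 (funext fun x => ?_)
  rw [hPg x]
  refine Finset.sum_eq_zero fun j _ => ?_
  rcases (h.v_nonneg j).eq_or_lt with hj | hj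
  · rw [h.kern_zero hj.symm]; simp
  · rw [hconst j hj, hgi, mul_zero]

end Equilibrium

/-! ### Regularity in the empirical measure -/

section Regularity

variable {N : ℕ} {α : ℝ} {A : Matrix (Fin N) (Fin N) ℝ} {v : Fin N → ℝ}

theorem contDiffAt_matrix_det {E : Type*} [NormedAddCommGroup E] [NormedSpace ℝ E] {n : Type*} [Fintype n]
    [DecidableEq n] {m : E → Matrix n n ℝ} {x : E}
    (hm : ∀ i j, ContDiffAt ℝ 1 (fun y => m y i j) x) : ContDiffAt ℝ 1 (fun y => (m y).det) x := by
  simp only [Matrix.det_apply']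
  exact ContDiffAt.sum fun σ _ => contDiffAt_const.mul (contDiffAt_prod fun i _ => hm _ _)

theorem contDiffAt_matrix_inv {E : Type*} [NormedAddCommGroup E] [NormedSpace ℝ E] {n : Type*} [Fintype n]
    [DecidableEq n] {m : E → Matrix n n ℝ} {x : E}
    (hm : ∀ i j, ContDiffAt ℝ 1 (fun y => m y i j) x) (hdet : (m x).det ≠ 0) (i j : n) :
    ContDiffAt ℝ 1 (fun y => (m y)⁻¹ i j) x := by
  simp only [Matrix.inv_def, Ring.inverse_eq_inv', Matrix.smul_apply, smul_eq_mul,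
    Matrix.adjugate_apply]
  refine ((contDiffAt_matrix_det hm).inv hdet).mul (contDiffAt_matrix_det fun k l => ?_)
  by_cases hk : k = j
  · subst hk
    simp only [Matrix.updateRow_self]
    exact contDiffAt_const
  · simp only [Matrix.updateRow_ne hk]
    exact hm k l

theorem contDiff_coord_rpow (hα : 1 < α) (k : Fin N) :
    ContDiff ℝ 1 (fun v : Fin N → ℝ => v k ^ α) := by
  have h1 : ContDiff ℝ 1 fun x : ℝ => x ^ α := by
    have := Real.contDiff_rpow_const_of_le (p := α) (n := 1) (by norm_num; exact hα.le)
    simpa using this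
  exact h1.comp (contDiff_apply ℝ ℝ k)

theorem contDiff_field (hα : 1 < α) (x : Fin N) : ContDiff ℝ 1 (fun v => field A α v x) :=
  ContDiff.sum fun k _ => contDiff_const.mul (contDiff_coord_rpow hα k)

theorem contDiff_Hfun (hα : 1 < α) : ContDiff ℝ 1 (fun v => Hfun A α v) := by
  simp only [Hfun_eq]
  exact ContDiff.sum fun k _ => (contDiff_coord_rpow hα k).mul (contDiff_field hα k)

theorem EqPoint.contDiffAt_kern (h : EqPoint A α v) (x j : Fin N) :
    ContDiffAt ℝ 1 (fun v => kern A α v x j) v :=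
  (contDiff_const.mul (contDiff_coord_rpow h.hα j)).contDiffAt.div
    (contDiff_field h.hα x).contDiffAt (h.field_pos x).ne'

theorem EqPoint.contDiffAt_piFun (h : EqPoint A α v) (i : Fin N) :
    ContDiffAt ℝ 1 (fun v => piFun A α v i) v :=
  ((contDiff_coord_rpow h.hα i).mul (contDiff_field h.hα i)).contDiffAt.div
    (contDiff_Hfun h.hα).contDiffAt h.H_pos.ne'

theorem EqPoint.contDiffAt_fundMat (h : EqPoint A α v) (x j : Fin N) :
    ContDiffAt ℝ 1 (fun v => fundMat A α v x j) v :=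
  (contDiffAt_const.sub (h.contDiffAt_kern x j)).add (h.contDiffAt_piFun j)

theorem EqPoint.contDiffAt_poissonSol_apply (h : EqPoint A α v) (x j : Fin N) :
    ContDiffAt ℝ 1 (fun v => poissonSol A α v x j) v :=
  contDiffAt_matrix_inv h.contDiffAt_fundMat h.det_ne_zero x j

theorem EqPoint.contDiffAt_poissonSol (h : EqPoint A α v) :
    ContDiffAt ℝ 1 (fun v => poissonSol A α v) v :=
  contDiffAt_pi.2 fun x => contDiffAt_pi.2 fun j => h.contDiffAt_poissonSol_apply x j

theorem EqPoint.contDiffAt_Ffield (h : EqPoint A α v) : ContDiffAt ℝ 1 (Ffield A α) v :=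
  contDiffAt_pi.2 fun i => (h.contDiffAt_piFun i).sub (contDiff_apply ℝ ℝ i).contDiffAt

theorem EqPoint.fderiv_Ffield (h : EqPoint A α v) (x : Fin N → ℝ) :
    fderiv ℝ (Ffield A α) v x = DFmat A α v *ᵥ x := by
  have hd : DifferentiableAt ℝ (Ffield A α) v := h.contDiffAt_Ffield.differentiableAt (by norm_num)
  have hd' : ∀ i, DifferentiableAt ℝ (fun u => Ffield A α u i) v := differentiableAt_pi.1 hd
  ext i
  have h1 : fderiv ℝ (Ffield A α) v x i = fderiv ℝ (fun u => Ffield A α u i) v x := by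
    rw [fderiv_apply hd i]; rfl
  rw [h1]
  have hx : x = ∑ j, x j • (Pi.single j 1 : Fin N → ℝ) := by
    ext k; simp [Finset.sum_apply, Pi.single_apply]
  conv_lhs => rw [hx]
  simp only [map_sum, map_smul, Matrix.mulVec, dotProduct, DFmat, smul_eq_mul]
  refine Finset.sum_congr rfl fun j _ => ?_
  rw [(hd' i).lineDeriv_eq_fderiv, mul_comm]

/-- Near `v` no denominator vanishes in the frozen chain, in `π` and in the fundamental matrix. -/
theorem EqPoint.eventually_pos (h : EqPoint A α v) :
    ∀ᶠ u in nhds v, (∀ x, field A α u x ≠ 0) ∧ Hfun A α u ≠ 0 ∧ (fundMat A α u).det ≠ 0 := by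
  have h1 : ∀ᶠ u in nhds v, ∀ x, field A α u x ≠ 0 := eventually_all.2 fun x =>
    (contDiff_field h.hα x).continuous.continuousAt.eventually_ne (h.field_pos x).ne'
  have h2 : ∀ᶠ u in nhds v, Hfun A α u ≠ 0 :=
    (contDiff_Hfun h.hα).continuous.continuousAt.eventually_ne h.H_pos.ne'
  have h3 : ∀ᶠ u in nhds v, (fundMat A α u).det ≠ 0 :=
    (contDiffAt_matrix_det h.contDiffAt_fundMat).continuousAt.eventually_ne h.det_ne_zero
  filter_upwards [h1, h2, h3] with u a b c using ⟨a, b, c⟩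

end Regularity

/-! ### The local model at an equilibrium -/

section Assembly

variable {N : ℕ} {α : ℝ} {A : Matrix (Fin N) (Fin N) ℝ} {v : Fin N → ℝ}

theorem continuous_bilin {ι : Type*} [Fintype ι] (B : (ι → ℝ) →ₗ[ℝ] (ι → ℝ) →ₗ[ℝ] ℝ) {KB : ℝ}
    (hB : ∀ x y, |B x y| ≤ KB * ‖x‖ * ‖y‖) : Continuous fun x : ι → ℝ => B x x := by
  have h1 := (LinearMap.mkContinuous₂ B KB hB).continuous₂
  exact h1.comp (continuous_id.prodMk continuous_id)

/-- At an equilibrium it suffices to have the growth of `B` along the Jacobian and the noise condition at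
`v` itself: the other requirements of `LocalModel`, and the noise condition nearby, follow by
continuity. -/
theorem EqPoint.localModel (h : EqPoint A α v) {B : (Fin N → ℝ) →ₗ[ℝ] (Fin N → ℝ) →ₗ[ℝ] ℝ}
    {χ : Fin N → ℝ} {s c KB : ℝ} (hs : 0 < s) (hc : 0 < c) (hKB : 0 ≤ KB)
    (B_symm : ∀ x y, B x y = B y x) (B_le : ∀ x y, |B x y| ≤ KB * ‖x‖ * ‖y‖)
    (coer : ∀ x, 2 * s * B x x + c * ‖x‖ ^ 2 ≤ 2 * B x (DFmat A α v *ᵥ x))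
    (χ_nonneg : ∀ x, 0 ≤ χ x)
    (noise : ∀ x, χ x + 1 ≤ ∑ j, kern A α v x j *
      (B (mgJump (kern A α) (poissonSol A α) v x j) (mgJump (kern A α) (poissonSol A α) v x j)
        + χ j)) :
    ∃ r K η, LocalModel v r (kern A α) (piFun A α) (poissonSol A α) (DFmat A α v).mulVecLin B χ
      s c KB K η (1 / 2) := by
  -- the linearization error allowed by the margin `c`
  set η : ℝ := min 1 (c / (8 * KB + 1)) with hηdef
  have hη : 0 < η := lt_min one_pos (by positivity)
  have hηc : 8 * KB * η ≤ c := by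
    have h1 : η ≤ c / (8 * KB + 1) := min_le_right _ _
    rw [le_div_iff₀ (by positivity)] at h1
    nlinarith
  obtain ⟨t1, ht1, hlin⟩ := (h.contDiffAt_Ffield.hasStrictFDerivAt
    (by norm_num)).approximates_deriv_on_nhds (c := ⟨η, hη.le⟩) (Or.inr hη)
  obtain ⟨Kl, t2, ht2, hlip⟩ := h.contDiffAt_poissonSol.exists_lipschitzOnWith
  have hQc := h.contDiffAt_poissonSol.continuousAt
  have hQb : ∀ᶠ u in nhds v, ‖poissonSol A α u‖ < ‖poissonSol A α v‖ + 1 :=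
    hQc.norm.eventually_lt_const (by linarith)
  have hnoise : ∀ᶠ u in nhds v, ∀ x, χ x + 1 / 2 < ∑ j, kern A α u x j *
      (B (mgJump (kern A α) (poissonSol A α) u x j) (mgJump (kern A α) (poissonSol A α) u x j)
        + χ j) := by
    refine eventually_all.2 fun x => Tendsto.eventually_const_lt
      (lt_of_lt_of_le (by linarith) (noise x)) ?_
    have hk : ∀ j, ContinuousAt (fun u => kern A α u x j) v :=
      fun j => (h.contDiffAt_kern x j).continuousAt
    have hQ : ∀ j, ContinuousAt (fun u => poissonSol A α u j) v := continuousAt_pi.1 hQc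
    have hmg : ∀ j, ContinuousAt (fun u => mgJump (kern A α) (poissonSol A α) u x j) v := fun j =>
      (hQ j).sub (tendsto_finsetSum _ fun k _ => (hk k).smul (hQ k))
    exact tendsto_finsetSum _ fun j _ => (hk j).mul
      (((continuous_bilin B B_le).continuousAt.comp (hmg j)).add continuousAt_const)
  obtain ⟨r, hr, hball⟩ := Metric.eventually_nhds_iff_ball.1
    ((((h.eventually_pos.and ht1).and ht2).and hQb).and (hnoise.and (Metric.ball_mem_nhds v one_pos)))
  set L := ‖fderiv ℝ (Ffield A α) v‖
  set K : ℝ := 1 + ‖v‖ + Kl + (‖poissonSol A α v‖ + 1) + L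
  have hL : 0 ≤ L := norm_nonneg _
  have hKl : (0 : ℝ) ≤ Kl := Kl.2
  have hv0 := norm_nonneg v
  have hq0 := norm_nonneg (poissonSol A α v)
  refine ⟨r, K, η, hr, hs, hc, by norm_num, hKB, ?_, hη.le, min_le_left _ _, hηc, B_symm, B_le, ?_,
    coer, ?_, ?_, ?_, ?_, ?_, ?_, ?_, ?_, χ_nonneg⟩
  · simp only [K]; linarith
  · intro x
    rw [Matrix.mulVecLin_apply, ← h.fderiv_Ffield]
    refine (ContinuousLinearMap.le_opNorm _ _).trans ?_
    gcongr
    simp only [K]; linarith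
  · intro u hu
    have h1 := (hball u hu).2.2
    rw [dist_eq_norm] at h1
    have h2 := norm_le_norm_add_norm_sub' u v
    simp only [K]; linarith
  · intro u _ hu x j
    exact kern_nonneg h.A_nonneg hu x j
  · intro u hu x
    exact sum_kern ((hball u hu).1.1.1.1.1 x)
  · intro u hu x
    obtain ⟨h1, h2, h3⟩ := (hball u hu).1.1.1.1
    exact poissonSol_eq h.symm h2 h1 h3 x
  · intro u hu x
    have h1 := (hball u hu).1.2
    have h2 := norm_le_pi_norm (poissonSol A α u) x
    simp only [K]; linarith
  · intro u hu u' hu' x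
    have h1 := hlip.norm_sub_le (hball u hu).1.1.2 (hball u' hu').1.1.2
    have h2 := norm_le_pi_norm (poissonSol A α u - poissonSol A α u') x
    refine (h2.trans h1).trans ?_
    gcongr
    simp only [K]; linarith
  · intro u hu u' hu'
    have h1 := hlin u (hball u hu).1.1.1.2 u' (hball u' hu').1.1.1.2
    rw [h.fderiv_Ffield] at h1
    rw [Matrix.mulVecLin_apply]
    have h2 : piFun A α u - piFun A α u' - (u - u') = Ffield A α u - Ffield A α u' := by
      ext i; simp only [Pi.sub_apply, Ffield]; ring
    rw [h2]
    exact h1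
  · intro u hu x
    exact ((hball u hu).2.1 x).le

end Assembly

/-! ### Self-adjoint matrices and the quadratic form -/

section LinearAlgebra

variable {ι : Type*} [Fintype ι]

/-- The inner product with weights `W`. -/
def wdot (W x y : ι → ℝ) : ℝ := ∑ i, W i * x i * y i

theorem wdot_comm (W x y : ι → ℝ) : wdot W x y = wdot W y x :=
  Finset.sum_congr rfl fun i _ => by ring

theorem wdot_add_left (W x x' y : ι → ℝ) : wdot W (x + x') y = wdot W x y + wdot W x' y := by
  simp only [wdot, ← Finset.sum_add_distrib, Pi.add_apply]
  exact Finset.sum_congr rfl fun i _ => by ring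

theorem wdot_smul_left (W x y : ι → ℝ) (a : ℝ) : wdot W (a • x) y = a * wdot W x y := by
  simp only [wdot, Finset.mul_sum, Pi.smul_apply, smul_eq_mul]
  exact Finset.sum_congr rfl fun i _ => by ring

theorem wdot_add_right (W x y y' : ι → ℝ) : wdot W x (y + y') = wdot W x y + wdot W x y' := by
  rw [wdot_comm, wdot_add_left, wdot_comm W y, wdot_comm W y']

theorem wdot_smul_right (W x y : ι → ℝ) (a : ℝ) : wdot W x (a • y) = a * wdot W x y := by
  rw [wdot_comm, wdot_smul_left, wdot_comm]

theorem wdot_sub_right (W x y y' : ι → ℝ) : wdot W x (y - y') = wdot W x y - wdot W x y' := by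
  rw [sub_eq_add_neg, ← neg_one_smul ℝ y', wdot_add_right, wdot_smul_right]; ring

theorem wdot_self_pos {W : ι → ℝ} (hW : ∀ i, 0 < W i) {x : ι → ℝ} (hx : x ≠ 0) :
    0 < wdot W x x := by
  obtain ⟨i, hi⟩ := Function.ne_iff.1 hx
  refine Finset.sum_pos' (fun k _ => ?_) ⟨i, Finset.mem_univ i, ?_⟩
  · rw [mul_assoc]; exact mul_nonneg (hW k).le (mul_self_nonneg _)
  · rw [mul_assoc]; exact mul_pos (hW i) (mul_self_pos.2 hi)

theorem wdot_self_nonneg {W : ι → ℝ} (hW : ∀ i, 0 < W i) (x : ι → ℝ) : 0 ≤ wdot W x x :=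
  Finset.sum_nonneg fun k _ => by
    rw [mul_assoc]; exact mul_nonneg (hW k).le (mul_self_nonneg _)

theorem wdot_mulVec {W : ι → ℝ} {D : Matrix ι ι ℝ} (hD : ∀ i j, W i * D i j = W j * D j i)
    (x y : ι → ℝ) : wdot W x (D *ᵥ y) = wdot W (D *ᵥ x) y := by
  simp only [wdot, mulVec, dotProduct, Finset.mul_sum, Finset.sum_mul]
  rw [Finset.sum_comm]
  refine Finset.sum_congr rfl fun j _ => Finset.sum_congr rfl fun i _ => ?_
  linear_combination (x i * y j) * hD i j

/-- A matrix that is self-adjoint for a weighted inner product has a real eigenvector as soon as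
it has a complex one. -/
theorem exists_real_eigenvector {W : ι → ℝ} (hW : ∀ i, 0 < W i) {D : Matrix ι ι ℝ}
    (hD : ∀ i j, W i * D i j = W j * D j i) {lam : ℂ} {x : ι → ℂ} (hx : x ≠ 0)
    (hsum : ∑ i, x i = 0) (heig : (D.map fun r => (r : ℂ)) *ᵥ x = lam • x) :
    ∃ w : ι → ℝ, w ≠ 0 ∧ ∑ i, w i = 0 ∧ D *ᵥ w = lam.re • w := by
  set a : ι → ℝ := fun i => (x i).re with ha
  set b : ι → ℝ := fun i => (x i).im with hb
  have hDa : D *ᵥ a = lam.re • a + (-lam.im) • b := by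
    ext i
    have := congrArg Complex.re (congrFun heig i)
    simp only [mulVec, dotProduct, Matrix.map_apply, Complex.re_sum, Complex.mul_re,
      Pi.smul_apply, smul_eq_mul, Complex.ofReal_re, Complex.ofReal_im, zero_mul, sub_zero] at this
    simp only [mulVec, dotProduct, Pi.add_apply, Pi.smul_apply, smul_eq_mul, ha, hb]
    linarith
  have hDb : D *ᵥ b = lam.re • b + lam.im • a := by
    ext i
    have := congrArg Complex.im (congrFun heig i)
    simp only [mulVec, dotProduct, Matrix.map_apply, Complex.im_sum, Complex.mul_im,
      Pi.smul_apply, smul_eq_mul, Complex.ofReal_re, Complex.ofReal_im, zero_mul, add_zero] at this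
    simp only [mulVec, dotProduct, Pi.add_apply, Pi.smul_apply, smul_eq_mul, ha, hb]
    linarith
  have hsa : ∑ i, a i = 0 := by simpa using congrArg Complex.re hsum
  have hsb : ∑ i, b i = 0 := by simpa using congrArg Complex.im hsum
  have hab : a ≠ 0 ∨ b ≠ 0 := by
    by_contra! hcon
    exact hx (funext fun i => Complex.ext (congrFun hcon.1 i) (congrFun hcon.2 i))
  have him : lam.im = 0 := by
    have h1 := wdot_mulVec hD a b
    rw [hDa, hDb, wdot_add_right, wdot_add_left, wdot_smul_right, wdot_smul_right,
      wdot_smul_left, wdot_smul_left] at h1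
    have h2 : lam.im * (wdot W a a + wdot W b b) = 0 := by linarith
    have h3 : 0 < wdot W a a + wdot W b b := by
      rcases hab with h | h
      · linarith [wdot_self_pos hW h, wdot_self_nonneg hW b]
      · linarith [wdot_self_pos hW h, wdot_self_nonneg hW a]
    exact (mul_eq_zero.1 h2).resolve_right h3.ne'
  rcases hab with h | h
  · exact ⟨a, h, hsa, by rw [hDa, him]; simp⟩
  · exact ⟨b, h, hsb, by rw [hDb, him]; simp⟩

/-- The spectrum is finite, so some `s` in `(0, p)` avoids it. -/
theorem exists_shift [DecidableEq ι] (D : Matrix ι ι ℝ) {p : ℝ} (hp : 0 < p) :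
    ∃ s, 0 < s ∧ s < p ∧ (D - Matrix.scalar ι s).det ≠ 0 := by
  obtain ⟨s, hs, hs'⟩ := ((Ioo_infinite hp).sdiff (D.charpoly.roots.toFinset.finite_toSet)).nonempty
  refine ⟨s, hs.1, hs.2, fun h0 => hs' ?_⟩
  have hne : D.charpoly ≠ 0 := (Matrix.charpoly_monic D).ne_zero
  simp only [Finset.mem_coe, Multiset.mem_toFinset, Polynomial.mem_roots hne,
    Polynomial.IsRoot.def, Matrix.eval_charpoly]
  rw [← neg_sub, Matrix.det_neg, h0, mul_zero]

theorem coercive_of_det_ne_zero [DecidableEq ι] {W : ι → ℝ} (hW : ∀ i, 0 < W i) {M : Matrix ι ι ℝ}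
    (hM : M.det ≠ 0) : ∃ c > 0, ∀ x, c * ‖x‖ ^ 2 ≤ wdot W (M *ᵥ x) (M *ᵥ x) := by
  set T := LinearMap.toContinuousLinearMap (M⁻¹.mulVecLin)
  set G := ∑ i, (W i)⁻¹
  have hG : 0 ≤ G := Finset.sum_nonneg fun i _ => (inv_pos.2 (hW i)).le
  have hpos : 0 < ‖T‖ ^ 2 * G + 1 := by positivity
  refine ⟨1 / (‖T‖ ^ 2 * G + 1), by positivity, fun x => ?_⟩
  set y := M *ᵥ x with hy
  have hxT : T y = x := by
    change M⁻¹ *ᵥ y = x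
    rw [hy, mulVec_mulVec, Matrix.nonsing_inv_mul _ (isUnit_iff_ne_zero.2 hM), one_mulVec]
  have hQ := wdot_self_nonneg hW y
  have h1 : ‖y‖ ^ 2 ≤ G * wdot W y y := by
    have h2 : ‖y‖ ≤ √(G * wdot W y y) := by
      rw [pi_norm_le_iff_of_nonneg (Real.sqrt_nonneg _)]
      intro i
      rw [Real.norm_eq_abs]
      refine Real.abs_le_sqrt ?_
      have h3 : W i * y i * y i ≤ wdot W y y :=
        Finset.single_le_sum (f := fun i => W i * y i * y i) (fun k _ => by
          rw [mul_assoc]; exact mul_nonneg (hW k).le (mul_self_nonneg _)) (Finset.mem_univ i)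
      have h4 : (W i)⁻¹ ≤ G :=
        Finset.single_le_sum (f := fun i => (W i)⁻¹) (fun k _ => (inv_pos.2 (hW k)).le)
          (Finset.mem_univ i)
      calc y i ^ 2 = (W i)⁻¹ * (W i * y i * y i) := by
            have := (hW i).ne'
            field_simp
        _ ≤ (W i)⁻¹ * wdot W y y := mul_le_mul_of_nonneg_left h3 (inv_pos.2 (hW i)).le
        _ ≤ G * wdot W y y := mul_le_mul_of_nonneg_right h4 hQ
    calc ‖y‖ ^ 2 ≤ √(G * wdot W y y) ^ 2 := by gcongr
      _ = _ := Real.sq_sqrt (mul_nonneg hG hQ)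
  have h2 : ‖x‖ ≤ ‖T‖ * ‖y‖ := by
    conv_lhs => rw [← hxT]
    exact T.le_opNorm y
  have h3 : ‖x‖ ^ 2 ≤ (‖T‖ ^ 2 * G + 1) * wdot W y y := by
    calc ‖x‖ ^ 2 ≤ (‖T‖ * ‖y‖) ^ 2 := by gcongr
      _ = ‖T‖ ^ 2 * ‖y‖ ^ 2 := by ring
      _ ≤ ‖T‖ ^ 2 * (G * wdot W y y) := by gcongr
      _ ≤ _ := by nlinarith
  rw [div_mul_eq_mul_div, one_mul, div_le_iff₀ hpos]
  linarith

theorem exists_bilin_bound (B : (ι → ℝ) →ₗ[ℝ] (ι → ℝ) →ₗ[ℝ] ℝ) :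
    ∃ K, 0 ≤ K ∧ ∀ x y, |B x y| ≤ K * ‖x‖ * ‖y‖ := by
  set B' := LinearMap.toContinuousLinearMap
    ((LinearMap.toContinuousLinearMap (𝕜 := ℝ) (E := ι → ℝ) (F' := ℝ)).toLinearMap ∘ₗ B)
  exact ⟨‖B'‖, ContinuousLinearMap.opNorm_nonneg B', fun x y => B'.le_opNorm₂ x y⟩

/-- The bilinear form `⟨x, (D - s) y⟩_W + L ⟨w, x⟩_W ⟨w, y⟩_W`. -/
noncomputable def lyapForm (W : ι → ℝ) (D : Matrix ι ι ℝ) (s L : ℝ) (w : ι → ℝ) :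
    (ι → ℝ) →ₗ[ℝ] (ι → ℝ) →ₗ[ℝ] ℝ :=
  LinearMap.mk₂ ℝ (fun x y => wdot W x (D *ᵥ y - s • y) + L * (wdot W w x * wdot W w y))
    (fun x x' y => by rw [wdot_add_left, wdot_add_right]; ring)
    (fun a x y => by rw [wdot_smul_left, wdot_smul_right, smul_eq_mul]; ring)
    (fun x y y' => by
      simp only [mulVec_add, smul_add, wdot_sub_right, wdot_add_right]; ring)
    (fun a x y => by
      simp only [mulVec_smul, wdot_sub_right, wdot_smul_right, smul_eq_mul]; ring)

theorem lyapForm_apply (W : ι → ℝ) (D : Matrix ι ι ℝ) (s L : ℝ) (w x y : ι → ℝ) :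
    lyapForm W D s L w x y = wdot W x (D *ᵥ y - s • y) + L * (wdot W w x * wdot W w y) := rfl

theorem lyapForm_symm {W : ι → ℝ} {D : Matrix ι ι ℝ} (hD : ∀ i j, W i * D i j = W j * D j i)
    (s L : ℝ) (w x y : ι → ℝ) : lyapForm W D s L w x y = lyapForm W D s L w y x := by
  simp only [lyapForm_apply, wdot_sub_right, wdot_smul_right]
  rw [wdot_mulVec hD, wdot_comm W (D *ᵥ x), wdot_comm W x y]; ring

/-- Along the linear flow the form grows at rate at least `2 s`, with a definite margin:
`B (x, D x) - s B (x, x) = ‖(D - s) x‖_W² + L (p - s) ⟨w, x⟩_W²`. -/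
theorem lyapForm_coer [DecidableEq ι] {W : ι → ℝ} (hW : ∀ i, 0 < W i) {D : Matrix ι ι ℝ}
    (hD : ∀ i j, W i * D i j = W j * D j i) {s p : ℝ} (hsp : s < p) {w : ι → ℝ}
    (hw : D *ᵥ w = p • w) (hdet : (D - Matrix.scalar ι s).det ≠ 0) :
    ∃ c > 0, ∀ L, 0 ≤ L → ∀ x, 2 * s * lyapForm W D s L w x x + c * ‖x‖ ^ 2 ≤
      2 * lyapForm W D s L w x (D *ᵥ x) := by
  obtain ⟨c, hc, hcx⟩ := coercive_of_det_ne_zero hW hdet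
  refine ⟨c, hc, fun L hL x => ?_⟩
  have h1 := hcx x
  have hz : (D - Matrix.scalar ι s) *ᵥ x = D *ᵥ x - s • x := by
    rw [sub_mulVec]
    congr 1
    ext i; simp
  rw [hz] at h1
  set z := D *ᵥ x - s • x with hzdef
  have h2 : lyapForm W D s L w x (D *ᵥ x) - s * lyapForm W D s L w x x =
      lyapForm W D s L w x z := by
    rw [hzdef, map_sub, map_smul, smul_eq_mul]
  have h3 : wdot W w z = (p - s) * wdot W w x := by
    rw [hzdef, wdot_sub_right, wdot_mulVec hD, hw, wdot_smul_left, wdot_smul_right]; ring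
  have h4 : lyapForm W D s L w x z = wdot W z z + L * ((p - s) * wdot W w x ^ 2) := by
    rw [lyapForm_symm hD, lyapForm_apply, ← hzdef, h3]; ring
  have h5 : 0 ≤ L * ((p - s) * wdot W w x ^ 2) :=
    mul_nonneg hL (mul_nonneg (by linarith) (sq_nonneg _))
  have h6 := wdot_self_nonneg hW z
  linarith

end LinearAlgebra

/-! ### The Jacobian at an equilibrium -/

section Jacobian

variable {N : ℕ} {α : ℝ} {A : Matrix (Fin N) (Fin N) ℝ} {v : Fin N → ℝ}

/-- Indicator of the support of `v`. -/
noncomputable def supp (v : Fin N → ℝ) (i : Fin N) : ℝ := if 0 < v i then 1 else 0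

/-- Weights that make the Jacobian self-adjoint: `v_i⁻¹` on the support of `v`, and `1` off it. -/
noncomputable def wt (v : Fin N → ℝ) (i : Fin N) : ℝ := if 0 < v i then (v i)⁻¹ else 1

theorem wt_pos (v : Fin N → ℝ) (i : Fin N) : 0 < wt v i := by
  unfold wt
  split_ifs with h
  · exact inv_pos.2 h
  · exact one_pos

theorem EqPoint.wt_mul (h : EqPoint A α v) (i : Fin N) : wt v i * v i = supp v i := by
  unfold wt supp
  split_ifs with hi
  · exact inv_mul_cancel₀ hi.ne'
  · rw [le_antisymm (not_lt.1 hi) (h.v_nonneg i), mul_zero]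

theorem EqPoint.rpow_eq (h : EqPoint A α v) (i : Fin N) : v i ^ α = v i * v i ^ (α - 1) := by
  rcases (h.v_nonneg i).eq_or_lt with hi | hi
  · rw [← hi, Real.zero_rpow (by linarith [h.hα]), zero_mul]
  · rw [Real.rpow_sub_one hi.ne']; field_simp

/-- On the support of an equilibrium, `v_i^(α-1) (A v^α)_i = H(v)`. -/
theorem EqPoint.q_field (h : EqPoint A α v) (i : Fin N) :
    v i ^ (α - 1) * field A α v i = supp v i * Hfun A α v := by
  unfold supp
  split_ifs with hi
  · have h1 := h.eq_mul i
    rw [h.rpow_eq] at h1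
    apply mul_left_cancel₀ hi.ne'
    linarith
  · rw [le_antisymm (not_lt.1 hi) (h.v_nonneg i), Real.zero_rpow (by linarith [h.hα])]; ring

theorem EqPoint.supp_mul_q (h : EqPoint A α v) (i : Fin N) :
    supp v i * v i ^ (α - 1) = v i ^ (α - 1) := by
  unfold supp
  split_ifs with hi
  · ring
  · rw [le_antisymm (not_lt.1 hi) (h.v_nonneg i), Real.zero_rpow (by linarith [h.hα])]; ring

/-- The partial derivatives of `F` at an equilibrium, simplified with `EqPoint.q_field`. -/
theorem EqPoint.DFmat_eq (h : EqPoint A α v) (i j : Fin N) :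
    DFmat A α v i j = (α * supp v i - 1) * (1 : Matrix (Fin N) (Fin N) ℝ) i j +
      α * v i * v i ^ (α - 1) * A i j * v j ^ (α - 1) / Hfun A α v - 2 * α * v i * supp v j := by
  set δ : Fin N → ℝ := fun k => (1 : Matrix (Fin N) (Fin N) ℝ) k j with hδ
  have hδs : ∀ k, (Pi.single j (1 : ℝ) : Fin N → ℝ) k = δ k := by
    intro k; simp [hδ, Matrix.one_apply, Pi.single_apply]
  have hsumδ : ∀ g : Fin N → ℝ, ∑ k, g k * δ k = g j := by
    intro g; simp [hδ, Matrix.one_apply]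
  have hc : ∀ k, HasDerivAt (fun t : ℝ => (v + t • (Pi.single j (1 : ℝ) : Fin N → ℝ)) k) (δ k) 0 := by
    intro k
    simp only [Pi.add_apply, Pi.smul_apply, smul_eq_mul, hδs]
    simpa using ((hasDerivAt_id (0 : ℝ)).mul_const (δ k)).const_add (v k)
  have hp : ∀ k, HasDerivAt (fun t : ℝ => (v + t • (Pi.single j (1 : ℝ) : Fin N → ℝ)) k ^ α)
      (α * v k ^ (α - 1) * δ k) 0 := by
    intro k
    have h1 := (hc k).rpow_const (p := α) (Or.inr h.hα.le)
    simp only [zero_smul, add_zero] at h1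
    convert h1 using 1
    ring
  have hf : ∀ k, HasDerivAt (fun t : ℝ => field A α (v + t • (Pi.single j (1 : ℝ) : Fin N → ℝ)) k)
      (α * A k j * v j ^ (α - 1)) 0 := by
    intro k
    have h1 := HasDerivAt.fun_sum (u := Finset.univ) fun l _ => (hp l).const_mul (A k l)
    refine h1.congr_deriv ?_
    have := hsumδ fun l => A k l * (α * v l ^ (α - 1))
    simp only [mul_assoc] at this ⊢
    rw [this]; ring
  have hH : HasDerivAt (fun t : ℝ => Hfun A α (v + t • (Pi.single j (1 : ℝ) : Fin N → ℝ)))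
      (2 * α * v j ^ (α - 1) * field A α v j) 0 := by
    simp only [Hfun_eq]
    have h1 := HasDerivAt.fun_sum (u := Finset.univ) fun l _ => (hp l).fun_mul (hf l)
    simp only [zero_smul, add_zero] at h1
    refine h1.congr_deriv ?_
    rw [Finset.sum_add_distrib]
    have h2 := hsumδ fun l => field A α v l * (α * v l ^ (α - 1))
    have h3 : ∑ l, α * v l ^ (α - 1) * δ l * field A α v l = field A α v j * (α * v j ^ (α - 1)) := by
      rw [← h2]
      exact Finset.sum_congr rfl fun l _ => by ring
    have h4 : ∑ l, v l ^ α * (α * A l j * v j ^ (α - 1)) = field A α v j * (α * v j ^ (α - 1)) := by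
      rw [field, Finset.sum_mul]
      exact Finset.sum_congr rfl fun l _ => by rw [h.symm l j]; ring
    rw [h3, h4]; ring
  have hF : HasDerivAt (fun t : ℝ => Ffield A α (v + t • (Pi.single j (1 : ℝ) : Fin N → ℝ)) i)
      (((α * v i ^ (α - 1) * δ i * field A α v i + v i ^ α * (α * A i j * v j ^ (α - 1))) *
        Hfun A α v - v i ^ α * field A α v i * (2 * α * v j ^ (α - 1) * field A α v j)) /
          Hfun A α v ^ 2 - δ i) 0 := by
    have h1 := (((hp i).fun_mul (hf i)).fun_div hH (by simpa using h.H_pos.ne')).fun_sub (hc i)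
    simp only [zero_smul, add_zero] at h1
    exact h1
  have hline : HasLineDerivAt ℝ (fun u => Ffield A α u i) _ v (Pi.single j 1) := hF
  rw [DFmat, hline.lineDeriv]
  have hHne := h.H_pos.ne'
  have e1 : α * v i ^ (α - 1) * δ i * field A α v i = α * δ i * (supp v i * Hfun A α v) := by
    rw [← h.q_field]; ring
  have e2 : 2 * α * v j ^ (α - 1) * field A α v j = 2 * α * (supp v j * Hfun A α v) := by
    rw [← h.q_field]; ring
  rw [e1, e2, h.eq_mul, h.rpow_eq]
  change _ = (α * supp v i - 1) * δ i + _ - _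
  field_simp
  ring

/-- The Jacobian is self-adjoint for the weights `wt`. -/
theorem EqPoint.wt_DFmat_symm (h : EqPoint A α v) (i j : Fin N) :
    wt v i * DFmat A α v i j = wt v j * DFmat A α v j i := by
  have key : ∀ i j, wt v i * DFmat A α v i j =
      wt v i * (α * supp v i - 1) * (1 : Matrix (Fin N) (Fin N) ℝ) i j +
      α * v i ^ (α - 1) * A i j * v j ^ (α - 1) / Hfun A α v - 2 * α * (supp v i * supp v j) := by
    intro i j
    rw [h.DFmat_eq]
    linear_combination (α * v i ^ (α - 1) * A i j * v j ^ (α - 1) / Hfun A α v -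
      2 * α * supp v j) * h.wt_mul i + α * A i j * v j ^ (α - 1) / Hfun A α v * h.supp_mul_q i
  rw [key, key, h.symm i j]
  by_cases hij : i = j
  · rw [hij]
  · rw [Matrix.one_apply_ne hij, Matrix.one_apply_ne (Ne.symm hij)]; ring

/-- Off the support, the Jacobian acts as `-1`. -/
theorem EqPoint.DFmat_mulVec_zero (h : EqPoint A α v) {i : Fin N} (hi : v i = 0) (w : Fin N → ℝ) :
    (DFmat A α v *ᵥ w) i = - w i := by
  have hs : supp v i = 0 := by simp [supp, hi]
  simp only [mulVec, dotProduct, h.DFmat_eq, hi, hs]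
  simp [Matrix.one_apply]

/-- On the support, the Jacobian is `(α - 1) + α P` after conjugation with the weights,
on vectors of zero sum that vanish off the support. -/
theorem EqPoint.DFmat_mulVec_pos (h : EqPoint A α v) {i : Fin N} (hi : 0 < v i) {w : Fin N → ℝ}
    (hw : ∑ j, w j = 0) (hw0 : ∀ j, v j = 0 → w j = 0) :
    (DFmat A α v *ᵥ w) i = (α - 1) * w i +
      α * v i * ∑ j, kern A α v i j * (wt v j * w j) := by
  have hs : supp v i = 1 := by simp [supp, hi]
  have hsw : ∀ j, supp v j * w j = w j := by
    intro j
    rcases (h.v_nonneg j).eq_or_lt with hj | hj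
    · rw [hw0 j hj.symm, mul_zero]
    · simp [supp, hj]
  have hfi := (h.field_pos i).ne'
  have hHne := h.H_pos.ne'
  have hq := h.q_field i
  rw [hs, one_mul] at hq
  have hk : ∀ j, kern A α v i j * (wt v j * w j) =
      v i ^ (α - 1) * A i j * v j ^ (α - 1) / Hfun A α v * w j := by
    intro j
    have h1 : kern A α v i j * (wt v j * w j) =
        A i j * (wt v j * v j) * v j ^ (α - 1) * w j / field A α v i := by
      rw [kern_eq, h.rpow_eq]; ring
    rw [h1, h.wt_mul, ← hq]
    conv_rhs => rw [← hsw j]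
    have : v i ^ (α - 1) ≠ 0 := (Real.rpow_pos_of_pos hi _).ne'
    field_simp
  simp only [mulVec, dotProduct, h.DFmat_eq, hs, hk, sub_mul, add_mul, Finset.sum_sub_distrib,
    Finset.sum_add_distrib]
  have h1 : ∑ j, α * 1 * (1 : Matrix (Fin N) (Fin N) ℝ) i j * w j = α * w i := by
    simp [Matrix.one_apply]
  have h2 : ∑ j, 1 * (1 : Matrix (Fin N) (Fin N) ℝ) i j * w j = w i := by
    simp [Matrix.one_apply]
  have h3 : ∑ j, 2 * α * v i * supp v j * w j = 0 := by
    calc _ = ∑ j, 2 * α * v i * w j := Finset.sum_congr rfl fun j _ => by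
            rw [mul_assoc _ (supp v j), hsw]
      _ = 0 := by rw [← Finset.mul_sum, hw, mul_zero]
  have h4 : ∑ j, α * v i * v i ^ (α - 1) * A i j * v j ^ (α - 1) / Hfun A α v * w j =
      α * v i * ∑ j, v i ^ (α - 1) * A i j * v j ^ (α - 1) / Hfun A α v * w j := by
    rw [Finset.mul_sum]
    exact Finset.sum_congr rfl fun j _ => by ring
  rw [h1, h2, h3, h4]
  ring

end Jacobian

/-! ### Non-degeneracy of the noise -/

section Noise

variable {N : ℕ} {α : ℝ} {A : Matrix (Fin N) (Fin N) ℝ} {v : Fin N → ℝ}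

theorem wdot_sum_right {ι κ : Type*} [Fintype ι] (W x : ι → ℝ) (s : Finset κ) (y : κ → ι → ℝ) :
    wdot W x (∑ k ∈ s, y k) = ∑ k ∈ s, wdot W x (y k) := by
  simp only [wdot, Finset.sum_apply, Finset.mul_sum]
  exact Finset.sum_comm

theorem EqPoint.eigenvector_off_support (h : EqPoint A α v) {w : Fin N → ℝ} {p : ℝ} (hp : 0 < p)
    (hw : DFmat A α v *ᵥ w = p • w) {j : Fin N} (hj : v j = 0) : w j = 0 := by
  have h1 := congrFun hw j
  rw [h.DFmat_mulVec_zero hj, Pi.smul_apply, smul_eq_mul] at h1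
  have h2 : (p + 1) * w j = 0 := by linarith
  exact (mul_eq_zero.1 h2).resolve_left (by linarith)

/-- The conditional variance, in state `x`, of the martingale increment in the direction `w`. -/
noncomputable def dirVar (A : Matrix (Fin N) (Fin N) ℝ) (α : ℝ) (v w : Fin N → ℝ) (x : Fin N) : ℝ :=
  ∑ j, kern A α v x j * wdot (wt v) w (mgJump (kern A α) (poissonSol A α) v x j) ^ 2

theorem EqPoint.dirVar_nonneg (h : EqPoint A α v) (w : Fin N → ℝ) (x : Fin N) :
    0 ≤ dirVar A α v w x :=
  Finset.sum_nonneg fun j _ => mul_nonneg (kern_nonneg h.A_nonneg h.v_nonneg x j) (sq_nonneg _)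

/-- The noise fluctuates in an unstable direction `w`. Put `g = ⟨w, Q⟩`, so that `g - P g = w / v`. If all
the variances on the support vanish, then `g` is constant, equal to `P g(x)`, on the neighbours of each
`x`; stepping back to `x` from a neighbour `j` gives `P g(j) = g(x)`, hence `P (w / v) = - w / v` and
`D w = -w`. -/
theorem EqPoint.exists_dirVar_pos (h : EqPoint A α v) {w : Fin N → ℝ} {p : ℝ} (hp : 0 < p)
    (hw : DFmat A α v *ᵥ w = p • w) (hsum : ∑ i, w i = 0) (hw0 : w ≠ 0) :
    ∃ x, 0 < v x ∧ 0 < dirVar A α v w x := by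
  by_contra! hcon
  have hoff : ∀ j, v j = 0 → w j = 0 := fun j hj => h.eigenvector_off_support hp hw hj
  have hk0 : ∀ x j, 0 ≤ kern A α v x j := kern_nonneg h.A_nonneg h.v_nonneg
  set g : Fin N → ℝ := fun j => wdot (wt v) w (poissonSol A α v j) with hg
  set Pg : Fin N → ℝ := fun x => ∑ k, kern A α v x k * g k with hPg
  have hmg : ∀ x j, wdot (wt v) w (mgJump (kern A α) (poissonSol A α) v x j) = g j - Pg x := by
    intro x j
    rw [mgJump, wdot_sub_right, wdot_sum_right]
    simp only [wdot_smul_right, hg, hPg]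
  have hflat : ∀ x j, 0 < v x → 0 < kern A α v x j → g j = Pg x := by
    intro x j hx hxj
    have h0 : dirVar A α v w x = 0 := le_antisymm (hcon x hx) (h.dirVar_nonneg w x)
    have h1 := (Finset.sum_eq_zero_iff_of_nonneg fun j _ =>
      mul_nonneg (hk0 x j) (sq_nonneg _)).1 h0 j (Finset.mem_univ j)
    have h2 := (mul_eq_zero.1 h1).resolve_left hxj.ne'
    rw [hmg] at h2
    linarith [pow_eq_zero_iff (two_ne_zero) |>.1 h2]
  have hf : ∀ x, field A α v x ≠ 0 := fun x => (h.field_pos x).ne'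
  have hpoisson : ∀ x, g x - Pg x = wt v x * w x := by
    intro x
    have h1 := congrArg (wdot (wt v) w)
      (poissonSol_eq h.symm h.H_pos.ne' hf h.det_ne_zero x)
    rw [wdot_sub_right, wdot_sum_right, wdot_sub_right, h.piFun_eq_self] at h1
    simp only [wdot_smul_right] at h1
    have h2 : wdot (wt v) w v = 0 := by
      rw [← hsum]
      refine Finset.sum_congr rfl fun i _ => ?_
      rw [mul_right_comm, h.wt_mul, supp]
      split_ifs with hi
      · ring
      · rw [hoff i (le_antisymm (not_lt.1 hi) (h.v_nonneg i)), mul_zero]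
    have h3 : wdot (wt v) w (Pi.single x 1) = wt v x * w x := by
      simp [wdot, Pi.single_apply]
    rw [h2, h3, sub_zero] at h1
    exact h1
  refine hw0 (funext fun x => ?_)
  rcases (h.v_nonneg x).eq_or_lt with hx | hx
  · exact hoff x hx.symm
  have hback : ∀ j, kern A α v x j * (wt v j * w j) = kern A α v x j * (g j - g x) := by
    intro j
    rcases (hk0 x j).eq_or_lt with hxj | hxj
    · rw [← hxj]; ring
    · have hj : 0 < v j := by
        by_contra hj
        rw [h.kern_zero (le_antisymm (not_lt.1 hj) (h.v_nonneg j))] at hxj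
        exact lt_irrefl _ hxj
      have hA : 0 < A j x := by
        refine lt_of_le_of_ne (h.A_nonneg j x) fun hA => hxj.ne' ?_
        rw [kern_eq, h.symm x j, ← hA]; simp
      rw [← hpoisson j, hflat j x hj (h.kern_pos hA hx)]
  have h1 := congrFun hw x
  rw [h.DFmat_mulVec_pos hx hsum hoff, Pi.smul_apply, smul_eq_mul] at h1
  have h2 : ∑ j, kern A α v x j * (wt v j * w j) = - (wt v x * w x) := by
    simp only [hback, mul_sub, Finset.sum_sub_distrib]
    rw [← Finset.sum_mul, sum_kern (hf x), ← hpoisson x]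
    simp only [hPg]; ring
  have h3 : wt v x * v x = 1 := by rw [h.wt_mul]; simp [supp, hx]
  rw [h2] at h1
  have h4 : (p + 1) * w x = 0 := by linear_combination -h1 - α * w x * h3
  exact (mul_eq_zero.1 h4).resolve_left (by linarith)

theorem exists_mul_ge {ι : Type*} [Fintype ι] (R : ι → ℝ) {θ : ι → ℝ} (hθ : ∀ x, 0 < θ x) :
    ∃ L, 0 ≤ L ∧ ∀ x, 1 ≤ R x + L * θ x := by
  have hnn : ∀ x, 0 ≤ (1 + |R x|) / θ x := fun x => by have := hθ x; positivity
  refine ⟨∑ x, (1 + |R x|) / θ x, Finset.sum_nonneg fun x _ => hnn x, fun x => ?_⟩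
  have h1 : (1 + |R x|) / θ x ≤ ∑ x, (1 + |R x|) / θ x :=
    Finset.single_le_sum (fun x _ => hnn x) (Finset.mem_univ x)
  rw [div_le_iff₀ (hθ x)] at h1
  linarith [neg_abs_le (R x)]

/-- At an unstable equilibrium the local model exists. With `V` the variance in the direction `w`, the
noise contributes `L V(x)` plus a bounded term to the form. As `V` may vanish at some states, the
corrector `χ = L V / 2` replaces it by `L (V + P V) / 2`, which is positive everywhere. -/
theorem EqPoint.exists_localModel (h : EqPoint A α v) (hunst : IsLinUnstable A α v) :
    ∃ r D B χ s c KB K η c0, LocalModel v r (kern A α) (piFun A α) (poissonSol A α) D B χ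
      s c KB K η c0 := by
  obtain ⟨lam, x, hx, hxsum, heig, hre⟩ := hunst
  have hW : ∀ i, 0 < wt v i := wt_pos v
  obtain ⟨w, hw0, hwsum, hw⟩ := exists_real_eigenvector hW h.wt_DFmat_symm hx hxsum heig
  obtain ⟨s, hs, hsp, hdet⟩ := exists_shift (DFmat A α v) hre
  obtain ⟨c, hc, hcoer⟩ := lyapForm_coer hW h.wt_DFmat_symm hsp hw hdet
  obtain ⟨x0, hx0, hV0⟩ := h.exists_dirVar_pos hre hw hwsum hw0
  have hk0 : ∀ x j, 0 ≤ kern A α v x j := kern_nonneg h.A_nonneg h.v_nonneg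
  set V := dirVar A α v w with hV
  have hVnn : ∀ x, 0 ≤ V x := h.dirVar_nonneg w
  set ξ := mgJump (kern A α) (poissonSol A α) v with hξ
  obtain ⟨L, hL, hRL⟩ := exists_mul_ge
    (fun x => ∑ j, kern A α v x j * wdot (wt v) (ξ x j) (DFmat A α v *ᵥ ξ x j - s • ξ x j))
    (θ := fun x => (V x + ∑ j, kern A α v x j * V j) / 2) (fun x => by
      have h1 : 0 ≤ ∑ j, kern A α v x j * V j :=
        Finset.sum_nonneg fun j _ => mul_nonneg (hk0 x j) (hVnn j)
      by_cases hxx : x = x0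
      · rw [hxx] at h1 ⊢
        linarith
      · have h2 : 0 < ∑ j, kern A α v x j * V j :=
          Finset.sum_pos' (fun j _ => mul_nonneg (hk0 x j) (hVnn j))
            ⟨x0, Finset.mem_univ x0, mul_pos (h.kern_pos (h.A_pos x x0 hxx) hx0) hV0⟩
        linarith [hVnn x])
  obtain ⟨KB, hKB, hB⟩ := exists_bilin_bound (lyapForm (wt v) (DFmat A α v) s L w)
  obtain ⟨r, K, η, hmodel⟩ := h.localModel (χ := fun x => L / 2 * V x) hs hc hKB
    (lyapForm_symm h.wt_DFmat_symm s L w) hB (hcoer L hL)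
    (fun x => mul_nonneg (by linarith) (hVnn x)) (fun x => by
      have h1 := hRL x
      have h2 : ∑ j, kern A α v x j *
          (lyapForm (wt v) (DFmat A α v) s L w (ξ x j) (ξ x j) + L / 2 * V j) =
          ∑ j, kern A α v x j * wdot (wt v) (ξ x j) (DFmat A α v *ᵥ ξ x j - s • ξ x j) +
            L * V x + L / 2 * ∑ j, kern A α v x j * V j := by
        rw [hV, dirVar, Finset.mul_sum, Finset.mul_sum, ← Finset.sum_add_distrib,
          ← Finset.sum_add_distrib]
        refine Finset.sum_congr rfl fun j _ => ?_
        rw [lyapForm_apply]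
        ring
      rw [h2]
      linarith)
  exact ⟨r, _, _, _, _, _, _, _, _, _, hmodel⟩

end Noise

/-- If `v*` is a linearly unstable equilibrium, then the probability that
the empirical occupation measure `v_n` converges to `v*` is zero. -/
theorem no_convergence_to_unstable_equilibrium
    {N : ℕ} (hN : 2 ≤ N) {α : ℝ} (hα : 1 < α)
    (A : Matrix (Fin N) (Fin N) ℝ)
    (hsymm : ∀ i j, A i j = A j i)
    (hnonneg : ∀ i j, 0 ≤ A i j)
    (hoffdiag : ∀ i j, i ≠ j → 0 < A i j)
    (hrow : ∀ i i', ∑ j, A i j = ∑ j, A i' j)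
    {Ω : Type*} [MeasurableSpace Ω] (μ : Measure Ω) [IsProbabilityMeasure μ]
    (X : ℕ → Ω → Fin N) (hX : ∀ n, Measurable (X n))
    (Z : ℕ → Fin N → Ω → ℕ)
    (hZ : ∀ n j ω, Z n j ω = ((Finset.range (n + 1)).filter fun ℓ => X ℓ ω = j).card)
    (hcond : ∀ (n : ℕ) (j : Fin N),
      μ[(fun ω => if X (n + 1) ω = j then (1 : ℝ) else 0) |
          ⨆ k ∈ Finset.range (n + 1), MeasurableSpace.comap (X k) ⊤] =ᵐ[μ]
        fun ω => A (X n ω) j * (1 + (Z n j ω : ℝ)) ^ α /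
          ∑ k : Fin N, A (X n ω) k * (1 + (Z n k ω : ℝ)) ^ α)
    (vstar : Fin N → ℝ) (hvstar : vstar ∈ simplexD A)
    (heq : Ffield A α vstar = 0) (hunst : IsLinUnstable A α vstar) :
    μ {ω | Tendsto (fun n : ℕ => fun i => (Z n i ω : ℝ) / ((n : ℝ) + 1)) atTop
        (nhds vstar)} = 0 := by
  obtain ⟨r, D, B, χ, s, c, KB, K, η, c0, hmodel⟩ :=
    (EqPoint.mk' hα hsymm hnonneg hoffdiag hvstar heq).exists_localModel hunst
  obtain ⟨T1, hT1⟩ := hmodel.surv_small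
  exact measure_tendsto_eq_zero hnonneg hX hZ hcond hmodel.hr hT1
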